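/- arXiv:1402.0799 — 13 statements merged into one kernel-verified Lean document; each statement's English description precedes it below -/
import Mathlib

section
/- Let G be a group and let H, K be subgroups of G with [G:H] = n and [G:K] = m both finite. Then for every g ∈ G, the number s of distinct left cosets of H contained in the double coset KgH and the number t of distinct right cosets of K contained in KgH are both finite and satisfy s·m = t·n (that is, s/t = n/m). -/
theorem card_left_aux {G : Type*} [Group G] (H K : Subgroup G) (g : G) :
    Nat.card {q : G ⧸ H | ∃ k ∈ K, ∃ h ∈ H, q = QuotientGroup.mk (k * g * h)} =
      (H.map (MulAut.conj g).toMonoidHom).relIndex K := by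
  have h1 : {q : G ⧸ H | ∃ k ∈ K, ∃ h ∈ H, q = QuotientGroup.mk (k * g * h)} =
      MulAction.orbit K (QuotientGroup.mk g : G ⧸ H) := by
    ext q
    constructor
    · rintro ⟨k, hk, h, hh, rfl⟩
      refine ⟨⟨k, hk⟩, ?_⟩
      change (QuotientGroup.mk (k * g) : G ⧸ H) = _
      rw [QuotientGroup.eq]
      simpa [mul_assoc] using hh
    · rintro ⟨⟨k, hk⟩, rfl⟩
      refine ⟨k, hk, 1, H.one_mem, ?_⟩
      rw [mul_one]
      rfl
  have h2 : (H.map (MulAut.conj g).toMonoidHom).subgroupOf K =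
      MulAction.stabilizer K (QuotientGroup.mk g : G ⧸ H) := by
    ext ⟨k, hk⟩
    rw [Subgroup.mem_subgroupOf, MulAction.mem_stabilizer_iff]
    change _ ↔ (QuotientGroup.mk (k * g) : G ⧸ H) = _
    rw [eq_comm, QuotientGroup.eq]
    constructor
    · rintro ⟨h, hh, e⟩
      have e' : g * h * g⁻¹ = k := e
      rw [← e']
      simpa [mul_assoc] using hh
    · intro hh
      refine ⟨_, hh, ?_⟩
      simp [mul_assoc]
  rw [h1, Subgroup.relIndex, h2, MulAction.index_stabilizer]
  rfl

theorem card_right_aux {G : Type*} [Group G] (H K : Subgroup G) (g : G) :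
    Nat.card {q : Quotient (QuotientGroup.rightRel K) |
        ∃ k ∈ K, ∃ h ∈ H, q = Quotient.mk'' (k * g * h)} =
      Nat.card {q : G ⧸ K | ∃ h ∈ H, ∃ k ∈ K, q = QuotientGroup.mk (h * g⁻¹ * k)} := by
  refine Nat.card_congr ((QuotientGroup.quotientRightRelEquivQuotientLeftRel K).subtypeEquiv ?_)
  intro q
  constructor
  · rintro ⟨k, hk, h, hh, rfl⟩
    refine ⟨h⁻¹, H.inv_mem hh, k⁻¹, K.inv_mem hk, ?_⟩
    change (QuotientGroup.mk (k * g * h)⁻¹ : G ⧸ K) = _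
    simp [mul_assoc]
  · rintro ⟨h, hh, k, hk, e⟩
    refine ⟨k⁻¹, K.inv_mem hk, h⁻¹, H.inv_mem hh, ?_⟩
    apply (QuotientGroup.quotientRightRelEquivQuotientLeftRel K).injective
    rw [e]
    change _ = (QuotientGroup.mk (k⁻¹ * g * h⁻¹)⁻¹ : G ⧸ K)
    simp [mul_assoc]

/-- If `[G:H] = n` and `[G:K] = m` are finite, then for each `g ∈ G` the set of left cosets
of `H` contained in the double coset `KgH` and the set of right cosets of `K` contained in
`KgH` are both finite, and their cardinalities `s`, `t` satisfy `s * m = t * n`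
(i.e. `s / t = n / m`). -/
theorem stmt_1 {G : Type*} [Group G] (H K : Subgroup G) (n m : ℕ)
    (hn : H.index = n) (hm : K.index = m) (hn0 : n ≠ 0) (hm0 : m ≠ 0) (g : G) :
    {q : G ⧸ H | ∃ k ∈ K, ∃ h ∈ H, q = QuotientGroup.mk (k * g * h)}.Finite ∧
    {q : Quotient (QuotientGroup.rightRel K) |
      ∃ k ∈ K, ∃ h ∈ H, q = Quotient.mk'' (k * g * h)}.Finite ∧
    Nat.card {q : G ⧸ H | ∃ k ∈ K, ∃ h ∈ H, q = QuotientGroup.mk (k * g * h)} * m =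
      Nat.card {q : Quotient (QuotientGroup.rightRel K) |
        ∃ k ∈ K, ∃ h ∈ H, q = Quotient.mk'' (k * g * h)} * n := by
  subst hn hm
  have : H.FiniteIndex := ⟨hn0⟩
  have : K.FiniteIndex := ⟨hm0⟩
  have : Finite (Quotient (QuotientGroup.rightRel K)) :=
    Finite.of_equiv _ (QuotientGroup.quotientRightRelEquivQuotientLeftRel K).symm
  refine ⟨Set.toFinite _, Set.toFinite _, ?_⟩
  rw [card_right_aux, card_left_aux, card_left_aux]
  have hidx : (H.map (MulAut.conj g).toMonoidHom).index = H.index :=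
    Subgroup.index_map_equiv H (MulAut.conj g)
  have hK : (K.map (MulAut.conj g⁻¹).toMonoidHom).map (MulAut.conj g).toMonoidHom = K := by
    rw [Subgroup.map_map]
    convert Subgroup.map_id K
    ext x
    simp [mul_assoc]
  have ht : (K.map (MulAut.conj g⁻¹).toMonoidHom).relIndex H =
      K.relIndex (H.map (MulAut.conj g).toMonoidHom) := by
    rw [← Subgroup.relIndex_map_map_of_injective (f := (MulAut.conj g).toMonoidHom) _ H
      (MulAut.conj g).injective]
    exact congrArg (fun L => L.relIndex (H.map (MulAut.conj g).toMonoidHom)) hK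
  rw [ht, ← hidx, ← Subgroup.inf_relIndex_right, Subgroup.relIndex_mul_index inf_le_right,
    ← Subgroup.inf_relIndex_right K, Subgroup.relIndex_mul_index inf_le_right, inf_comm]
end

section
/- Let G be a group and let H, K be subgroups of G with [G:H] = n and [G:K] = m finite, where m ≥ n. Then there exists a set T ⊆ G which is a left transversal for H in G and which is contained in some right transversal for K in G. Moreover, if H = K then there exists a left-right transversal for H in G. -/
/-- A left transversal for `H` in `G`: a set containing exactly one element of each left
coset of `H`. -/
def IsLeftTransversal {G : Type*} [Group G] (H : Subgroup G) (T : Set G) : Prop :=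
  ∀ g : G, ∃! t, t ∈ T ∧ g⁻¹ * t ∈ H

/-- A right transversal for `H` in `G`: a set containing exactly one element of each right
coset of `H`. -/
def IsRightTransversal {G : Type*} [Group G] (H : Subgroup G) (T : Set G) : Prop :=
  ∀ g : G, ∃! t, t ∈ T ∧ t * g⁻¹ ∈ H

open Classical in
theorem aux_count {G : Type*} [Group G] (L H : Subgroup G) (hle : L ≤ H) [L.FiniteIndex]
    (S : Set (G ⧸ H)) :
    Nat.card {q : G ⧸ L // Subgroup.quotientMapOfLE hle q ∈ S} = Nat.card S * L.relIndex H := by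
  rw [Subgroup.relIndex, Subgroup.index, ← Nat.card_prod]
  refine Nat.card_congr (((Subgroup.quotientEquivProdOfLE hle).subtypeEquiv
    (q := fun p => p.1 ∈ S) ?_).trans ?_)
  · intro a
    induction a using QuotientGroup.induction_on with
    | H z => exact Iff.rfl
  · exact
      { toFun := fun p => (⟨p.1.1, p.2⟩, p.1.2)
        invFun := fun p => ⟨(p.1.1, p.2), p.1.2⟩
        left_inv := fun p => rfl
        right_inv := fun p => rfl }

theorem aux_hall {G : Type*} [Group G] (H K : Subgroup G) [H.FiniteIndex] [K.FiniteIndex]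
    (hle : H.index ≤ K.index) :
    ∃ f : G ⧸ H → G ⧸ K, Function.Injective f ∧
      ∀ x, ∃ g : G, (g : G ⧸ H) = x ∧ ((g⁻¹ : G) : G ⧸ K) = f x := by
  classical
  have := Fintype.ofFinite (G ⧸ H)
  have := Fintype.ofFinite (G ⧸ K)
  refine (Fintype.all_card_le_filter_rel_iff_exists_injective
    (fun (x : G ⧸ H) (y : G ⧸ K) => ∃ g : G, (g : G ⧸ H) = x ∧ ((g⁻¹ : G) : G ⧸ K) = y)).1 ?_
  intro A
  set B : Finset (G ⧸ K) := Finset.univ.filter (fun y => ∃ a ∈ A, ∃ g : G, (g : G ⧸ H) = a ∧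
    ((g⁻¹ : G) : G ⧸ K) = y) with hB
  let L := (H ⊓ K).normalCore
  have hLH : L ≤ H := (Subgroup.normalCore_le _).trans inf_le_left
  have hLK : L ≤ K := (Subgroup.normalCore_le _).trans inf_le_right
  have hLf : L.FiniteIndex := inferInstance
  have cH := aux_count L H hLH (A : Set (G ⧸ H))
  have cK := aux_count L K hLK (B : Set (G ⧸ K))
  have hcard : Nat.card {q : G ⧸ L // Subgroup.quotientMapOfLE hLH q ∈ (A : Set (G ⧸ H))} ≤
      Nat.card {q : G ⧸ L // Subgroup.quotientMapOfLE hLK q ∈ (B : Set (G ⧸ K))} := by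
    refine Nat.card_le_card_of_injective
      (fun q => ⟨q.1⁻¹, ?_⟩) ?_
    · obtain ⟨q, hq⟩ := q
      induction q using QuotientGroup.induction_on with
      | H z =>
        simp only [hB, Finset.coe_filter, Set.mem_ofPred_eq, Finset.mem_univ, true_and]
        exact ⟨_, hq, z, rfl, rfl⟩
    · intro a b h
      exact Subtype.ext (inv_injective (congrArg Subtype.val h))
  rw [cH, cK] at hcard
  simp only [Nat.card_eq_fintype_card, Fintype.card_coe, Finset.coe_sort_coe] at hcard
  have iH := Subgroup.relIndex_mul_index hLH
  have iK := Subgroup.relIndex_mul_index hLK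
  have h0 : L.index ≠ 0 := hLf.index_ne_zero
  have hKpos : 0 < L.relIndex K := by
    rcases Nat.eq_zero_or_pos (L.relIndex K) with h | h
    · rw [h] at iK; simp at iK; exact absurd iK.symm h0
    · exact h
  have hrel : L.relIndex K ≤ L.relIndex H := by
    have hp : 0 < K.index := Nat.pos_of_ne_zero Subgroup.FiniteIndex.index_ne_zero
    by_contra hc
    push Not at hc
    nlinarith
  have : A.card * L.relIndex K ≤ B.card * L.relIndex K :=
    (Nat.mul_le_mul_left _ hrel).trans hcard
  exact Nat.le_of_mul_le_mul_right this hKpos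

theorem aux_left {G : Type*} [Group G] (H : Subgroup G) (t : G ⧸ H → G)
    (ht : ∀ x, (t x : G ⧸ H) = x) : IsLeftTransversal H (Set.range t) := by
  intro g
  refine ⟨t g, ⟨⟨_, rfl⟩, QuotientGroup.eq.1 (ht g).symm⟩, ?_⟩
  rintro _ ⟨⟨x, rfl⟩, hx⟩
  have := QuotientGroup.eq.2 hx
  rw [ht] at this
  rw [this]

theorem aux_right {G : Type*} [Group G] (K : Subgroup G) (s : G ⧸ K → G)
    (hs : ∀ y, (((s y)⁻¹ : G) : G ⧸ K) = y) : IsRightTransversal K (Set.range s) := by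
  intro g
  refine ⟨s (g⁻¹ : G), ⟨⟨_, rfl⟩, ?_⟩, ?_⟩
  · have := QuotientGroup.eq.1 (hs (g⁻¹ : G))
    simpa using this
  rintro _ ⟨⟨x, rfl⟩, hx⟩
  have : (((s x)⁻¹ : G) : G ⧸ K) = (g⁻¹ : G) := QuotientGroup.eq.2 (by simpa using hx)
  rw [hs] at this
  rw [this]

/-- If `[G:H] = n` and `[G:K] = m` are finite with `m ≥ n`, then there is a left transversal
`T` for `H` which is contained in some right transversal for `K`; moreover if `H = K` then
there is a left-right transversal for `H`. -/
theorem stmt_2 {G : Type*} [Group G] (H K : Subgroup G) (n m : ℕ)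
    (hn : H.index = n) (hm : K.index = m) (hn0 : n ≠ 0) (hm0 : m ≠ 0) (hnm : n ≤ m) :
    (∃ T T' : Set G, IsLeftTransversal H T ∧ IsRightTransversal K T' ∧ T ⊆ T') ∧
    (H = K → ∃ T : Set G, IsLeftTransversal H T ∧ IsRightTransversal H T) := by
  classical
  haveI : H.FiniteIndex := ⟨by rw [hn]; exact hn0⟩
  haveI : K.FiniteIndex := ⟨by rw [hm]; exact hm0⟩
  obtain ⟨f, hf, hg⟩ := aux_hall H K (by rw [hn, hm]; exact hnm)
  choose t ht1 ht2 using hg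
  have hs : ∀ y : G ⧸ K, ∃ g : G, ((g⁻¹ : G) : G ⧸ K) = y ∧ ∀ x, f x = y → g = t x := by
    intro y
    by_cases h : ∃ x, f x = y
    · obtain ⟨x, rfl⟩ := h
      exact ⟨t x, ht2 x, fun x' hx' => by rw [hf hx']⟩
    · obtain ⟨g, rfl⟩ := QuotientGroup.mk_surjective y
      exact ⟨g⁻¹, by rw [inv_inv], fun x hx => absurd ⟨x, hx⟩ h⟩
  choose s hs1 hs2 using hs
  refine ⟨⟨Set.range t, Set.range s, aux_left H t ht1, aux_right K s hs1, ?_⟩, ?_⟩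
  · rintro _ ⟨x, rfl⟩
    exact ⟨f x, hs2 _ x rfl⟩
  · rintro rfl
    have hsurj : Function.Surjective f := Finite.surjective_of_injective hf
    refine ⟨Set.range t, aux_left H t ht1, ?_⟩
    have : Set.range t = Set.range s := by
      ext g
      constructor
      · rintro ⟨x, rfl⟩
        exact ⟨f x, hs2 _ x rfl⟩
      · rintro ⟨y, rfl⟩
        obtain ⟨x, rfl⟩ := hsurj y
        exact ⟨x, (hs2 _ x rfl).symm⟩
    rw [this]
    exact aux_right H s hs1
end

section
/- Let G be a group, H a subgroup of G, and S a generating n-tuple of G. Then there is a generating n-tuple S' of G, Nielsen equivalent to S, such that no left coset of H other than H itself contains more than one entry of S' (the coset H may contain several entries). The analogous statement holds for right cosets of H. -/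
/-- A single Nielsen move on an `n`-tuple of elements of `G`: replace an entry `g i` by
`g j * g i`, `(g j)⁻¹ * g i`, `g i * g j` or `g i * (g j)⁻¹` for some `j ≠ i` (standard
moves), or replace an entry by its inverse, or transpose two entries (extended moves). -/
def IsNielsenMove {G : Type*} [Group G] {n : ℕ} (S S' : Fin n → G) : Prop :=
  (∃ i j, i ≠ j ∧
    (S' = Function.update S i (S j * S i) ∨ S' = Function.update S i ((S j)⁻¹ * S i) ∨
     S' = Function.update S i (S i * S j) ∨ S' = Function.update S i (S i * (S j)⁻¹))) ∨
  (∃ i, S' = Function.update S i (S i)⁻¹) ∨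
  (∃ i j, i ≠ j ∧ S' = S ∘ Equiv.swap i j)

/-- Two `n`-tuples are Nielsen equivalent if they differ by a finite sequence of Nielsen
moves. -/
def NielsenEquiv {G : Type*} [Group G] {n : ℕ} (S S' : Fin n → G) : Prop :=
  Relation.ReflTransGen IsNielsenMove S S'

theorem nielsen_aux {G : Type*} [Group G] (H : Subgroup G) {n : ℕ} (op : G → G → G)
    (hop : (∀ a b, op a b = a⁻¹ * b) ∨ (∀ a b, op a b = b * a⁻¹)) (m : ℕ) :
    ∀ S : Fin n → G, {i | S i ∉ H}.ncard ≤ m → Subgroup.closure (Set.range S) = ⊤ →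
    ∃ S' : Fin n → G, NielsenEquiv S S' ∧ Subgroup.closure (Set.range S') = ⊤ ∧
      ∀ i j, i ≠ j → op (S' i) (S' j) ∈ H → S' i ∈ H := by
  induction m with
  | zero =>
    intro S hm hS
    refine ⟨S, Relation.ReflTransGen.refl, hS, fun i j _ _ => ?_⟩
    have h0 : {i | S i ∉ H} = ∅ := (Set.ncard_eq_zero (Set.toFinite _)).1 (Nat.le_zero.1 hm)
    by_contra hi
    have : i ∈ {i | S i ∉ H} := hi
    rw [h0] at this
    exact this
  | succ m ih =>
    intro S hm hS
    by_cases hgood : ∀ i j, i ≠ j → op (S i) (S j) ∈ H → S i ∈ H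
    · exact ⟨S, Relation.ReflTransGen.refl, hS, hgood⟩
    push Not at hgood
    obtain ⟨i, j, hij, hH, hi⟩ := hgood
    have hj : S j ∉ H := by
      intro hj
      apply hi
      rcases hop with h | h <;> rw [h] at hH
      · exact inv_mem_iff.1 ((H.mul_mem_cancel_right hj).1 hH)
      · exact inv_mem_iff.1 ((H.mul_mem_cancel_left hj).1 hH)
    set T := Function.update S j (op (S i) (S j)) with hT
    have hTj : T j = op (S i) (S j) := by simp [hT]
    have hTk : ∀ k, k ≠ j → T k = S k := fun k hk => by simp [hT, hk]
    have hcl : Subgroup.closure (Set.range T) = ⊤ := by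
      rw [eq_top_iff, ← hS, Subgroup.closure_le]
      have hmem : ∀ k, T k ∈ Subgroup.closure (Set.range T) :=
        fun k => Subgroup.subset_closure ⟨k, rfl⟩
      rintro _ ⟨k, rfl⟩
      by_cases hk : k = j
      · subst hk
        have h1 := hmem i
        have h2 := hmem k
        rw [hTk i hij] at h1
        rw [hTj] at h2
        rcases hop with h | h <;> rw [h] at h2
        · exact (Subgroup.mul_mem_cancel_left _ (inv_mem h1)).1 h2
        · exact (Subgroup.mul_mem_cancel_right _ (inv_mem h1)).1 h2
      · rw [← hTk k hk]
        exact hmem k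
    have hcard : {k | T k ∉ H}.ncard ≤ m := by
      have hlt : {k | T k ∉ H}.ncard < {k | S k ∉ H}.ncard := by
        apply Set.ncard_lt_ncard _ (Set.toFinite _)
        refine ⟨fun k hk => ?_, fun hsub => ?_⟩
        · by_cases hkj : k = j
          · subst hkj; exact hj
          · have hk' : T k ∉ H := hk
            rw [hTk k hkj] at hk'
            exact hk'
        · have : T j ∉ H := hsub hj
          rw [hTj] at this
          exact this hH
      omega
    obtain ⟨S', h1, h2, h3⟩ := ih T hcard hcl
    refine ⟨S', Relation.ReflTransGen.head ?_ h1, h2, h3⟩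
    refine Or.inl ⟨j, i, hij.symm, ?_⟩
    rcases hop with h | h
    · exact Or.inr (Or.inl (by rw [hT, h]))
    · exact Or.inr (Or.inr (Or.inr (by rw [hT, h])))

/-- Given a generating `n`-tuple `S` of `G` and a subgroup `H`, there is a Nielsen
equivalent generating `n`-tuple `S'` such that no left coset of `H` other than `H` itself
contains more than one entry of `S'`; and likewise (separately) for right cosets. -/
theorem stmt_3 {G : Type*} [Group G] (H : Subgroup G) {n : ℕ} (S : Fin n → G)
    (hS : Subgroup.closure (Set.range S) = ⊤) :
    (∃ S' : Fin n → G, NielsenEquiv S S' ∧ Subgroup.closure (Set.range S') = ⊤ ∧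
      ∀ i j, i ≠ j → (S' i)⁻¹ * S' j ∈ H → S' i ∈ H) ∧
    (∃ S' : Fin n → G, NielsenEquiv S S' ∧ Subgroup.closure (Set.range S') = ⊤ ∧
      ∀ i j, i ≠ j → S' j * (S' i)⁻¹ ∈ H → S' i ∈ H) := by
  exact ⟨nielsen_aux H (fun a b => a⁻¹ * b) (Or.inl fun _ _ => rfl) _ S le_rfl hS,
    nielsen_aux H (fun a b => b * a⁻¹) (Or.inr fun _ _ => rfl) _ S le_rfl hS⟩
end

section
/- Let G be a group, H a subgroup of G, and S a generating n-tuple of G with n ≤ [G:H] (allowing the possibility that H has infinite index in G). Then there is a generating n-tuple S' of G, Nielsen equivalent to S, such that no two entries of S' lie in the same left coset of H. -/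
open scoped Pointwise

theorem nielsen_move_closure {G : Type*} [Group G] {n : ℕ} {S T : Fin n → G}
    (h : IsNielsenMove S T) (hS : Subgroup.closure (Set.range S) = ⊤) :
    Subgroup.closure (Set.range T) = ⊤ := by
  have hT : ∀ k, T k ∈ Subgroup.closure (Set.range T) :=
    fun k => Subgroup.subset_closure ⟨k, rfl⟩
  rw [eq_top_iff, ← hS, Subgroup.closure_le]
  -- entries other than `i` are unchanged by an update at `i`
  have key : ∀ (i : Fin n) (x : G), T = Function.update S i x →
      S i ∈ Subgroup.closure (Set.range T) → ∀ k, S k ∈ Subgroup.closure (Set.range T) := by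
    intro i x hx hi k
    by_cases hk : k = i
    · rw [hk]; exact hi
    · have := hT k
      rwa [show T k = S k by rw [hx, Function.update_of_ne hk]] at this
  rintro _ ⟨k, rfl⟩
  rcases h with ⟨i, j, hij, h⟩ | ⟨i, h⟩ | ⟨i, j, hij, h⟩
  · have hj : ∀ x, T = Function.update S i x → S j ∈ Subgroup.closure (Set.range T) := by
      intro x hx
      have := hT j
      rwa [show T j = S j by rw [hx, Function.update_of_ne hij.symm]] at this
    have hi : ∀ x, T = Function.update S i x → x ∈ Subgroup.closure (Set.range T) := by
      intro x hx
      have := hT i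
      rwa [show T i = x by rw [hx, Function.update_self]] at this
    rcases h with h | h | h | h
    · exact key i _ h ((Subgroup.mul_mem_cancel_left _ (hj _ h)).1 (hi _ h)) k
    · exact key i _ h
        ((Subgroup.mul_mem_cancel_left _ (Subgroup.inv_mem _ (hj _ h))).1 (hi _ h)) k
    · exact key i _ h ((Subgroup.mul_mem_cancel_right _ (hj _ h)).1 (hi _ h)) k
    · exact key i _ h
        ((Subgroup.mul_mem_cancel_right _ (Subgroup.inv_mem _ (hj _ h))).1 (hi _ h)) k
  · refine key i _ h ?_ k
    have := hT i
    rw [show T i = (S i)⁻¹ by rw [h, Function.update_self]] at this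
    exact (Subgroup.inv_mem_iff _).1 this
  · have := hT (Equiv.swap i j k)
    rwa [show T (Equiv.swap i j k) = S k by rw [h]; simp] at this

theorem nielsen_equiv_closure {G : Type*} [Group G] {n : ℕ} {S T : Fin n → G}
    (h : NielsenEquiv S T) (hS : Subgroup.closure (Set.range S) = ⊤) :
    Subgroup.closure (Set.range T) = ⊤ := by
  induction h with
  | refl => exact hS
  | tail _ hm ih => exact nielsen_move_closure hm ih

/-- The set of left cosets of `H` met by the tuple `S`. -/
def cosetsOf {G : Type*} [Group G] (H : Subgroup G) {n : ℕ} (S : Fin n → G) : Set (G ⧸ H) :=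
  Set.range fun i => (S i : G ⧸ H)

/-- No Nielsen equivalent tuple meets strictly more cosets, containing those of `S`. -/
def CosetMax {G : Type*} [Group G] (H : Subgroup G) {n : ℕ} (S : Fin n → G) : Prop :=
  ∀ T, NielsenEquiv S T → cosetsOf H S ⊆ cosetsOf H T → cosetsOf H T ⊆ cosetsOf H S

theorem exists_cosetMax {G : Type*} [Group G] (H : Subgroup G) {n : ℕ} (S : Fin n → G) :
    ∃ T, NielsenEquiv S T ∧ CosetMax H T := by
  have hfin : ∀ T : Fin n → G, (cosetsOf H T).Finite := fun T => Set.finite_range _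
  have hbd : ∀ T : Fin n → G, (cosetsOf H T).ncard ≤ n := by
    intro T
    have := Set.ncard_image_le (f := fun i => (T i : G ⧸ H)) (s := Set.univ) Set.finite_univ
    simpa [cosetsOf, Set.image_univ] using this
  -- minimise `n - ncard`
  obtain ⟨T, hT, hmin⟩ := (measure (fun T : Fin n → G => n - (cosetsOf H T).ncard)).wf.has_min
    {T | NielsenEquiv S T} ⟨S, Relation.ReflTransGen.refl⟩
  refine ⟨T, hT, fun U hU hsub => ?_⟩
  have h1 := hmin U (Relation.ReflTransGen.trans hT hU)
  have h2 : ¬ (n - (cosetsOf H U).ncard < n - (cosetsOf H T).ncard) := h1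
  have := hbd U
  have := hbd T
  exact (Set.eq_of_subset_of_ncard_le hsub (by omega) (hfin U)).symm.subset

theorem CosetMax.trans {G : Type*} [Group G] {H : Subgroup G} {n : ℕ} {S T : Fin n → G}
    (hS : CosetMax H S) (h : NielsenEquiv S T) (hsub : cosetsOf H S ⊆ cosetsOf H T) :
    CosetMax H T := by
  intro U hU hTU
  exact (hS U (Relation.ReflTransGen.trans h hU) (hsub.trans hTU)).trans hsub

theorem cosetsOf_subset_update {G : Type*} [Group G] {H : Subgroup G} {n : ℕ} {S : Fin n → G}
    {a b : Fin n} (hab : a ≠ b) (hc : (S a : G ⧸ H) = S b) (x : G) :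
    cosetsOf H S ⊆ cosetsOf H (Function.update S a x) := by
  rintro _ ⟨k, rfl⟩
  by_cases hk : k = a
  · exact ⟨b, by simp [Function.update_of_ne hab.symm, hk, hc]⟩
  · exact ⟨k, by simp [Function.update_of_ne hk]⟩

theorem CosetMax.mem_of_update {G : Type*} [Group G] {H : Subgroup G} {n : ℕ} {S : Fin n → G}
    (hS : CosetMax H S) {a b : Fin n} (hab : a ≠ b) (hc : (S a : G ⧸ H) = S b) {x : G}
    (h : NielsenEquiv S (Function.update S a x)) : (x : G ⧸ H) ∈ cosetsOf H S :=
  hS _ h (cosetsOf_subset_update hab hc x) ⟨a, by simp⟩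

/-- Two entries in `H` plus maximality force all cosets to be met. -/
theorem CosetMax.eq_univ {G : Type*} [Group G] {H : Subgroup G} {n : ℕ} {S : Fin n → G}
    (hS : CosetMax H S) (hgen : Subgroup.closure (Set.range S) = ⊤)
    {a b : Fin n} (hab : a ≠ b) (ha : S a ∈ H) (hb : S b ∈ H) :
    cosetsOf H S = Set.univ := by
  have hfin : (cosetsOf H S).Finite := Set.finite_range _
  have stab : ∀ g : G, (∀ k, ((g * S k : G) : G ⧸ H) ∈ cosetsOf H S) →
      g ∈ MulAction.stabilizer G (cosetsOf H S) := by
    intro g hg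
    rw [MulAction.mem_stabilizer_set_iff_smul_set_subset hfin]
    rintro _ ⟨_, ⟨k, rfl⟩, rfl⟩
    exact hg k
  have mulH : ∀ (g c : G), c ∈ H → ((g * c : G) : G ⧸ H) = g := by
    intro g c hc
    exact QuotientGroup.mk_mul_of_mem g hc
  have coH : ∀ c d : G, c ∈ H → d ∈ H → (c : G ⧸ H) = d := by
    intro c d hc hd
    exact QuotientGroup.eq.2 (H.mul_mem (H.inv_mem hc) hd)
  have key : ∀ c d : Fin n, c ≠ d → S c ∈ H → S d ∈ H →
      S c ∈ MulAction.stabilizer G (cosetsOf H S) := by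
    intro c d hcd hc hd
    apply stab
    intro k
    by_cases hk : k = c
    · subst hk
      rw [mulH _ _ hc]
      exact ⟨k, rfl⟩
    · refine hS.mem_of_update hcd (coH _ _ hc hd) (Relation.ReflTransGen.single ?_)
      exact Or.inl ⟨c, k, fun h => hk h.symm, Or.inr (Or.inr (Or.inl rfl))⟩
  have hall : ∀ i, S i ∈ MulAction.stabilizer G (cosetsOf H S) := by
    intro i
    by_cases hia : i = a
    · subst hia; exact key i b hab ha hb
    have hA := key a b hab ha hb
    have h2 : (S i)⁻¹ * S a ∈ MulAction.stabilizer G (cosetsOf H S) := by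
      apply stab
      have hm : IsNielsenMove S (Function.update S a ((S i)⁻¹ * S a)) :=
        Or.inl ⟨a, i, fun h => hia h.symm, Or.inr (Or.inl rfl)⟩
      intro k
      by_cases hk : k = a
      · subst hk
        rw [mulH _ _ ha]
        exact hS.mem_of_update hab (coH _ _ ha hb) (Relation.ReflTransGen.single hm)
      · refine hS.mem_of_update hab (coH _ _ ha hb)
          (Relation.ReflTransGen.tail (Relation.ReflTransGen.single hm) ?_)
        refine Or.inl ⟨a, k, fun h => hk h.symm, Or.inr (Or.inr (Or.inl ?_))⟩
        simp [Function.update_of_ne hk]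
    exact (Subgroup.inv_mem_iff _).1 ((Subgroup.mul_mem_cancel_right _ hA).1 h2)
  have htop : MulAction.stabilizer G (cosetsOf H S) = ⊤ := by
    rw [eq_top_iff, ← hgen, Subgroup.closure_le]
    rintro _ ⟨i, rfl⟩
    exact hall i
  rw [Set.eq_univ_iff_forall]
  intro q
  induction q using QuotientGroup.induction_on with
  | H g =>
    have hg : g ∈ MulAction.stabilizer G (cosetsOf H S) := by rw [htop]; trivial
    rw [MulAction.mem_stabilizer_iff] at hg
    rw [← hg]
    refine ⟨(S a : G ⧸ H), ⟨a, rfl⟩, ?_⟩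
    exact mulH g _ ha

/-- If `S` is a generating `n`-tuple of `G` and `H` is a subgroup with `n ≤ [G:H]`
(possibly `[G:H] = ∞`, expressed via the cardinality of `G ⧸ H`), then there is a
Nielsen-equivalent generating `n`-tuple `S'` no two of whose entries lie in the same left
coset of `H`. -/
theorem stmt_5 {G : Type*} [Group G] (H : Subgroup G) {n : ℕ} (S : Fin n → G)
    (hS : Subgroup.closure (Set.range S) = ⊤)
    (hindex : (n : Cardinal) ≤ Cardinal.mk (G ⧸ H)) :
    ∃ S' : Fin n → G, NielsenEquiv S S' ∧ Subgroup.closure (Set.range S') = ⊤ ∧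
      ∀ i j, i ≠ j → (S' i)⁻¹ * S' j ∉ H := by
  obtain ⟨T, hST, hmax⟩ := exists_cosetMax H S
  have hT := nielsen_equiv_closure hST hS
  refine ⟨T, hST, hT, ?_⟩
  intro i j hij hmem
  have hq : (T i : G ⧸ H) = T j := QuotientGroup.eq.2 hmem
  have huniv : cosetsOf H T = Set.univ := by
    by_cases hi : T i ∈ H
    · have hj : T j ∈ H := (Subgroup.mul_mem_cancel_left _ (H.inv_mem hi)).1 hmem
      exact hmax.eq_univ hT hij hi hj
    · have hmove : NielsenEquiv T (Function.update T j ((T i)⁻¹ * T j)) :=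
        Relation.ReflTransGen.single (Or.inl ⟨j, i, hij.symm, Or.inr (Or.inl rfl)⟩)
      have hsub := cosetsOf_subset_update hij.symm hq.symm ((T i)⁻¹ * T j)
      obtain ⟨l, hl⟩ := hmax.mem_of_update hij.symm hq.symm hmove
      have hl' : T l ∈ H := by
        have h3 : (T l)⁻¹ * ((T i)⁻¹ * T j) ∈ H := QuotientGroup.eq.1 hl
        exact (Subgroup.inv_mem_iff _).1 ((Subgroup.mul_mem_cancel_right _ hmem).1 h3)
      have hlj : l ≠ j := by
        rintro rfl
        exact hi ((Subgroup.inv_mem_iff _).1 ((Subgroup.mul_mem_cancel_right _ hl').1 hmem))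
      have h4 := (hmax.trans hmove hsub).eq_univ (nielsen_equiv_closure hmove hT) hlj
        (by rwa [Function.update_of_ne hlj]) (by rwa [Function.update_self])
      exact Set.eq_univ_of_univ_subset (h4 ▸ hmax _ hmove hsub)
  have hsurj : Function.Surjective (fun k => (T k : G ⧸ H)) := Set.range_eq_univ.1 huniv
  have hfin : Finite (G ⧸ H) := Finite.of_surjective _ hsurj
  have hcard : n ≤ Nat.card (G ⧸ H) := by
    rw [← Nat.cast_card] at hindex
    exact_mod_cast hindex
  have hinj : Function.Injective (fun k => (T k : G ⧸ H)) := by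
    have hle := Nat.card_le_card_of_surjective _ hsurj
    rw [Nat.card_fin] at hle
    exact ((Nat.bijective_iff_surjective_and_card _).2
      ⟨hsurj, by rw [Nat.card_fin]; omega⟩).1
  exact hij (hinj hq)
end

section
/- Let G be a group, S a generating n-tuple of G, and H a subgroup of G with n ≤ [G:H] (allowing the possibility that H has infinite index in G). Then there is a generating n-tuple S' of G, Nielsen equivalent to S, and a left transversal T for H in G such that every entry of S' belongs to T. -/
theorem nm_closure_le {G : Type*} [Group G] {n : ℕ} {S S' : Fin n → G}
    (h : IsNielsenMove S S') :
    Subgroup.closure (Set.range S) ≤ Subgroup.closure (Set.range S') := by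
  have key : ∀ k, S' k ∈ Subgroup.closure (Set.range S') := fun k =>
    Subgroup.subset_closure ⟨k, rfl⟩
  rw [Subgroup.closure_le]
  rintro _ ⟨k, rfl⟩
  show S k ∈ Subgroup.closure (Set.range S')
  rcases h with ⟨i, j, hij, h⟩ | ⟨i, h⟩ | ⟨i, j, hij, h⟩
  · have hi := key i
    have hj := key j
    have hk := key k
    have hj' : S' j = S j := by
      rcases h with h | h | h | h <;> rw [h, Function.update_of_ne hij.symm]
    by_cases hki : k = i
    · subst hki
      rw [hj'] at hj
      rcases h with h | h | h | h
      · have e : S' k = S j * S k := by rw [h, Function.update_self]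
        rw [e] at hi
        exact (Subgroup.mul_mem_cancel_left _ hj).1 hi
      · have e : S' k = (S j)⁻¹ * S k := by rw [h, Function.update_self]
        rw [e] at hi
        exact (Subgroup.mul_mem_cancel_left _ (inv_mem hj)).1 hi
      · have e : S' k = S k * S j := by rw [h, Function.update_self]
        rw [e] at hi
        exact (Subgroup.mul_mem_cancel_right _ hj).1 hi
      · have e : S' k = S k * (S j)⁻¹ := by rw [h, Function.update_self]
        rw [e] at hi
        exact (Subgroup.mul_mem_cancel_right _ (inv_mem hj)).1 hi
    · have hk' : S' k = S k := by
        rcases h with h | h | h | h <;> rw [h, Function.update_of_ne hki]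
      rwa [hk'] at hk
  · have hk := key k
    by_cases hki : k = i
    · subst hki
      rw [h, Function.update_self, ← h] at hk
      exact inv_mem_iff.1 hk
    · have hk' : S' k = S k := by rw [h, Function.update_of_ne hki]
      rwa [hk'] at hk
  · have hk := key (Equiv.swap i j k)
    have e : S' (Equiv.swap i j k) = S k := by simp [h]
    rwa [e] at hk

theorem ne_closure {G : Type*} [Group G] {n : ℕ} {S S' : Fin n → G}
    (h : NielsenEquiv S S') (hS : Subgroup.closure (Set.range S) = ⊤) :
    Subgroup.closure (Set.range S') = ⊤ := by
  induction h with
  | refl => exact hS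
  | tail _ h2 ih => exact top_le_iff.1 (ih ▸ nm_closure_le h2)

/-- The subgroup generated by the entries other than the `i`-th. -/
def restGroup {G : Type*} [Group G] {n : ℕ} (S : Fin n → G) (i : Fin n) : Subgroup G :=
  Subgroup.closure (S '' {k | k ≠ i})

theorem ne_left {G : Type*} [Group G] {n : ℕ} (S : Fin n → G) (i : Fin n) {u : G}
    (hu : u ∈ restGroup S i) :
    (∀ g, NielsenEquiv (Function.update S i g) (Function.update S i (u * g))) ∧
    (∀ g, NielsenEquiv (Function.update S i g) (Function.update S i (u⁻¹ * g))) := by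
  induction hu using Subgroup.closure_induction with
  | mem x hx =>
    obtain ⟨k, hk, rfl⟩ := hx
    have hk : k ≠ i := hk
    constructor <;> intro g <;> refine Relation.ReflTransGen.single (Or.inl ⟨i, k, hk.symm, ?_⟩)
    · left; simp [Function.update_of_ne hk]
    · right; left; simp [Function.update_of_ne hk]
  | one => constructor <;> intro g <;> simp <;> exact Relation.ReflTransGen.refl
  | mul x y _ _ hx hy =>
    constructor <;> intro g
    · rw [mul_assoc]; exact (hy.1 g).trans (hx.1 _)
    · rw [mul_inv_rev, mul_assoc]; exact (hx.2 g).trans (hy.2 _)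
  | inv x _ hx => exact ⟨hx.2, by simpa using hx.1⟩

theorem ne_right {G : Type*} [Group G] {n : ℕ} (S : Fin n → G) (i : Fin n) {u : G}
    (hu : u ∈ restGroup S i) :
    (∀ g, NielsenEquiv (Function.update S i g) (Function.update S i (g * u))) ∧
    (∀ g, NielsenEquiv (Function.update S i g) (Function.update S i (g * u⁻¹))) := by
  induction hu using Subgroup.closure_induction with
  | mem x hx =>
    obtain ⟨k, hk, rfl⟩ := hx
    have hk : k ≠ i := hk
    constructor <;> intro g <;> refine Relation.ReflTransGen.single (Or.inl ⟨i, k, hk.symm, ?_⟩)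
    · right; right; left; simp [Function.update_of_ne hk]
    · right; right; right; simp [Function.update_of_ne hk]
  | one => constructor <;> intro g <;> simp <;> exact Relation.ReflTransGen.refl
  | mul x y _ _ hx hy =>
    constructor <;> intro g
    · rw [← mul_assoc]; exact (hx.1 g).trans (hy.1 _)
    · rw [mul_inv_rev, ← mul_assoc]; exact (hy.2 g).trans (hx.2 _)
  | inv x _ hx => exact ⟨hx.2, by simpa using hx.1⟩

theorem ne_both {G : Type*} [Group G] {n : ℕ} (S : Fin n → G) (i : Fin n) {u v : G}
    (hu : u ∈ restGroup S i) (hv : v ∈ restGroup S i) :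
    NielsenEquiv S (Function.update S i (u * S i * v)) ∧
    NielsenEquiv S (Function.update S i (u * (S i)⁻¹ * v)) := by
  have h1 : ∀ g, NielsenEquiv (Function.update S i g) (Function.update S i (u * g * v)) :=
    fun g => ((ne_left S i hu).1 g).trans ((ne_right S i hv).1 _)
  constructor
  · simpa using h1 (S i)
  · exact Relation.ReflTransGen.head (Or.inr (Or.inl ⟨i, rfl⟩)) (h1 _)

/-- One can always increase the number of cosets hit. -/
theorem ne_improve {G : Type*} [Group G] (H : Subgroup G) {n : ℕ} (S : Fin n → G)
    (hS : Subgroup.closure (Set.range S) = ⊤)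
    (hindex : (n : Cardinal) ≤ Cardinal.mk (G ⧸ H))
    (hni : ¬ Function.Injective (fun k => (S k : G ⧸ H))) :
    ∃ S', NielsenEquiv S S' ∧ (Set.range (fun k => (S k : G ⧸ H))).ncard <
      (Set.range (fun k => (S' k : G ⧸ H))).ncard := by
  by_contra hcon
  push Not at hcon
  simp only [Function.Injective, not_forall] at hni
  obtain ⟨i, j, hij, hne⟩ := hni
  replace hij : (S i : G ⧸ H) = S j := hij
  set A : Set (G ⧸ H) := Set.range (fun k => (S k : G ⧸ H)) with hA
  have hA' : ∀ a ∈ A, ∃ l, l ≠ i ∧ (S l : G ⧸ H) = a := by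
    rintro _ ⟨l, rfl⟩
    by_cases hl : l = i
    · subst hl; exact ⟨j, Ne.symm hne, hij.symm⟩
    · exact ⟨l, hl, rfl⟩
  have hK : ∀ l, l ≠ i → S l ∈ restGroup S i := fun l hl =>
    Subgroup.subset_closure ⟨l, hl, rfl⟩
  have key : ∀ g : G, NielsenEquiv S (Function.update S i g) → (g : G ⧸ H) ∈ A := by
    intro g hg
    by_contra hgA
    have h1 := hcon _ hg
    have h2 : insert (g : G ⧸ H) A ⊆
        Set.range (fun k => (Function.update S i g k : G ⧸ H)) := by
      rintro a (rfl | ha)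
      · exact ⟨i, by simp⟩
      · obtain ⟨l, hl, rfl⟩ := hA' a ha
        exact ⟨l, by simp [Function.update_of_ne hl]⟩
    have h3 := Set.ncard_le_ncard h2 (Set.finite_range _)
    rw [Set.ncard_insert_of_notMem hgA (Set.finite_range _)] at h3
    omega
  have hinv : ∀ g : G, (∀ a ∈ A, g • a ∈ A) ∧ (∀ a ∈ A, g⁻¹ • a ∈ A) := by
    intro g
    have hg : g ∈ Subgroup.closure (Set.range S) := hS ▸ Subgroup.mem_top g
    -- left multiplication by the group generated by the others
    have hleft : ∀ w ∈ restGroup S i, ∀ a ∈ A, w • a ∈ A := by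
      intro w hw a ha
      obtain ⟨l, hl, rfl⟩ := hA' a ha
      have h1 := key _ (ne_both S i (u := w * S l * (S j)⁻¹) (v := 1)
        (mul_mem (mul_mem hw (hK l hl)) (inv_mem (hK j (Ne.symm hne)))) (one_mem _)).1
      have h2 : ((w * S l * (S j)⁻¹ * S i * 1 : G) : G ⧸ H) = w • (S l : G ⧸ H) := by
        have : ((w * S l * (S j)⁻¹ * S i * 1 : G) : G ⧸ H) =
            (w * S l * (S j)⁻¹) • (S i : G ⧸ H) := by
          rw [mul_one]; rfl
        rw [this, hij]
        show ((w * S l * (S j)⁻¹ * S j : G) : G ⧸ H) = ((w * S l : G) : G ⧸ H)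
        simp
      rwa [h2] at h1
    induction hg using Subgroup.closure_induction with
    | mem x hx =>
      obtain ⟨k, rfl⟩ := hx
      by_cases hk : k = i
      · subst hk
        constructor <;> intro a ha <;> obtain ⟨l, hl, rfl⟩ := hA' a ha
        · have := key _ (ne_both S k (one_mem _) (hK l hl)).1
          rwa [one_mul] at this
        · have := key _ (ne_both S k (one_mem _) (hK l hl)).2
          rwa [one_mul] at this
      · exact ⟨hleft _ (hK k hk), hleft _ (inv_mem (hK k hk))⟩
    | one => simp
    | mul x y _ _ hx hy =>
      constructor <;> intro a ha
      · rw [mul_smul]; exact hx.1 _ (hy.1 _ ha)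
      · rw [mul_inv_rev, mul_smul]; exact hy.2 _ (hx.2 _ ha)
    | inv x _ hx => exact ⟨hx.2, by simpa using hx.1⟩
  have hsurj : Function.Surjective (fun k : {k : Fin n // k ≠ i} => (S k : G ⧸ H)) := by
    intro q
    obtain ⟨g, rfl⟩ := QuotientGroup.mk_surjective q
    have h1 := (hinv (g * (S i)⁻¹)).1 (S i : G ⧸ H) ⟨i, rfl⟩
    have h2 : (g * (S i)⁻¹) • (S i : G ⧸ H) = (g : G ⧸ H) := by
      show ((g * (S i)⁻¹ * S i : G) : G ⧸ H) = g
      simp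
    rw [h2] at h1
    obtain ⟨l, hl, h⟩ := hA' _ h1
    exact ⟨⟨l, hl⟩, h⟩
  have hfin : Finite (G ⧸ H) := Finite.of_surjective _ hsurj
  have hc := Nat.card_le_card_of_surjective _ hsurj
  rw [← Nat.cast_card, Nat.cast_le] at hindex
  have h4 : Nat.card {k : Fin n // k ≠ i} = n - 1 := by simp
  have := i.pos
  omega

theorem ne_exists_inj {G : Type*} [Group G] (H : Subgroup G) {n : ℕ}
    (hindex : (n : Cardinal) ≤ Cardinal.mk (G ⧸ H)) (d : ℕ) (S : Fin n → G)
    (hS : Subgroup.closure (Set.range S) = ⊤)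
    (hd : n ≤ (Set.range (fun k => (S k : G ⧸ H))).ncard + d) :
    ∃ S', NielsenEquiv S S' ∧ Function.Injective (fun k => (S' k : G ⧸ H)) := by
  induction d generalizing S with
  | zero =>
    by_cases hi : Function.Injective (fun k => (S k : G ⧸ H))
    · exact ⟨S, Relation.ReflTransGen.refl, hi⟩
    · obtain ⟨S', h1, h2⟩ := ne_improve H S hS hindex hi
      have h3 : (Set.range (fun k => (S' k : G ⧸ H))).ncard ≤ n := by
        rw [← Set.image_univ]
        refine (Set.ncard_image_le Set.finite_univ).trans ?_
        simp [Set.ncard_univ]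
      omega
  | succ d ih =>
    by_cases hi : Function.Injective (fun k => (S k : G ⧸ H))
    · exact ⟨S, Relation.ReflTransGen.refl, hi⟩
    · obtain ⟨S', h1, h2⟩ := ne_improve H S hS hindex hi
      obtain ⟨S'', h3, h4⟩ := ih S' (ne_closure h1 hS) (by omega)
      exact ⟨S'', Relation.ReflTransGen.trans h1 h3, h4⟩

/-- If `S` is a generating `n`-tuple of `G` and `H` is a subgroup with `n ≤ [G:H]`
(possibly `[G:H] = ∞`), then there is a Nielsen-equivalent generating `n`-tuple `S'` and a
left transversal `T` for `H` in `G` containing every entry of `S'`. -/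
theorem stmt_6 {G : Type*} [Group G] (H : Subgroup G) {n : ℕ} (S : Fin n → G)
    (hS : Subgroup.closure (Set.range S) = ⊤)
    (hindex : (n : Cardinal) ≤ Cardinal.mk (G ⧸ H)) :
    ∃ (S' : Fin n → G) (T : Set G), NielsenEquiv S S' ∧
      Subgroup.closure (Set.range S') = ⊤ ∧ IsLeftTransversal H T ∧ ∀ i, S' i ∈ T := by
  obtain ⟨S', h1, hinj⟩ := ne_exists_inj H hindex n S hS (by omega)
  have hf : ∀ q : G ⧸ H, ∃ g : G, (g : G ⧸ H) = q ∧ ∀ i, (S' i : G ⧸ H) = q → g = S' i := by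
    intro q
    by_cases hq : ∃ i, (S' i : G ⧸ H) = q
    · obtain ⟨i, hi⟩ := hq
      exact ⟨S' i, hi, fun k hk => by rw [hinj (hi.trans hk.symm)]⟩
    · obtain ⟨g, hg⟩ := QuotientGroup.mk_surjective q
      exact ⟨g, hg, fun k hk => absurd ⟨k, hk⟩ hq⟩
  choose f hf1 hf2 using hf
  refine ⟨S', Set.range f, h1, ne_closure h1 hS, ?_, fun i => ⟨S' i, hf2 _ i rfl⟩⟩
  intro g
  refine ⟨f g, ⟨⟨_, rfl⟩, QuotientGroup.eq.1 (hf1 g).symm⟩, ?_⟩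
  rintro _ ⟨⟨q, rfl⟩, hq⟩
  have := QuotientGroup.eq.2 hq
  rw [hf1] at this
  rw [this]
end

section
/- Let G be a finitely generated group and H a subgroup of finite index in G. Then the following are equivalent: (1) there exists a left transversal T for H in G with ⟨T⟩ = G; (2) [G:H] ≥ d(G). -/
theorem stmt_7_step {G : Type*} [Group G] (H : Subgroup G) [Finite (G ⧸ H)]
    {ι : Type*} (f : ι → G) (hf : Subgroup.closure (Set.range f) = ⊤)
    (i j : ι) (hij : i ≠ j) (hc : (f i : G ⧸ H) = f j)
    (m : G ⧸ H) (hm : m ∉ Set.range fun l => (f l : G ⧸ H)) :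
    ∃ f' : ι → G, Subgroup.closure (Set.range f') = ⊤ ∧
      (Set.range fun l => (f l : G ⧸ H)) ⊂ Set.range fun l => (f' l : G ⧸ H) := by
  classical
  by_contra hcon
  set K := Subgroup.closure (f '' {i}ᶜ) with hK
  set h := (f j)⁻¹ * f i with hh
  have hH : h ∈ H := QuotientGroup.eq.1 hc.symm
  have hfK : ∀ l, l ≠ i → f l ∈ K := fun l hl => Subgroup.subset_closure ⟨l, hl, rfl⟩
  have key : ∀ x : G, (∀ L : Subgroup G, K ≤ L → x ∈ L → h ∈ L) →
      (x : G ⧸ H) ∈ Set.range fun l => (f l : G ⧸ H) := by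
    intro x hx
    by_contra hxr
    apply hcon
    refine ⟨Function.update f i x, ?_, ?_⟩
    · set L := Subgroup.closure (Set.range (Function.update f i x)) with hL
      have hne : ∀ l, l ≠ i → f l ∈ L := fun l hl =>
        Subgroup.subset_closure ⟨l, by simp [hl]⟩
      have hKL : K ≤ L := by
        rw [hK, Subgroup.closure_le]
        rintro _ ⟨l, hl, rfl⟩
        exact hne l hl
      have hhL : h ∈ L := hx L hKL (Subgroup.subset_closure ⟨i, by simp⟩)
      rw [eq_top_iff, ← hf, Subgroup.closure_le]
      rintro _ ⟨l, rfl⟩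
      by_cases hl : l = i
      · subst hl
        have := L.mul_mem (hne j hij.symm) hhL
        simpa [hh] using this
      · exact hne l hl
    · refine (Set.ssubset_iff_of_subset ?_).2 ⟨x, ⟨i, by simp⟩, hxr⟩
      rintro _ ⟨l, rfl⟩
      by_cases hl : l = i
      · subst hl
        exact ⟨j, by simp [hij.symm, hc]⟩
      · exact ⟨l, by simp [hl]⟩
  have h1 : ∀ k ∈ K, (k : G ⧸ H) ∈ Set.range fun l => (f l : G ⧸ H) := by
    intro k hk
    have := key (k * h) (fun L hKL hx => (L.mul_mem_cancel_left (hKL hk)).1 hx)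
    rwa [QuotientGroup.mk_mul_of_mem k hH] at this
  have h2 : ∀ k ∈ K, ((h * k : G) : G ⧸ H) ∈ Set.range fun l => (f l : G ⧸ H) := by
    intro k hk
    exact key (h * k) (fun L hKL hx => (L.mul_mem_cancel_right (hKL hk)).1 hx)
  set C : Set (G ⧸ H) := (fun x : G => (x : G ⧸ H)) '' (K : Set G) with hC
  have hrC : (Set.range fun l => (f l : G ⧸ H)) ⊆ C := by
    rintro _ ⟨l, rfl⟩
    by_cases hl : l = i
    · subst hl
      exact ⟨f j, hfK j hij.symm, hc.symm⟩
    · exact ⟨f l, hfK l hl, rfl⟩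
  open scoped Pointwise in
  have hst : ∀ g : G, (∀ k ∈ K, ((g * k : G) : G ⧸ H) ∈ C) →
      g ∈ MulAction.stabilizer G C := by
    intro g hg
    rw [MulAction.mem_stabilizer_iff]
    apply Set.eq_of_subset_of_ncard_le _ _ (Set.toFinite _)
    · rintro _ ⟨_, ⟨k, hk, rfl⟩, rfl⟩
      exact hg k hk
    · rw [Set.ncard_smul_set]
  open scoped Pointwise in
  have htop : MulAction.stabilizer G C = ⊤ := by
    have hfl : ∀ l, l ≠ i → f l ∈ MulAction.stabilizer G C := fun l hl =>
      hst _ fun k hk => ⟨_, K.mul_mem (hfK l hl) hk, rfl⟩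
    rw [eq_top_iff, ← hf, Subgroup.closure_le]
    rintro _ ⟨l, rfl⟩
    by_cases hl : l = i
    · subst hl
      have := (MulAction.stabilizer G C).mul_mem (hfl j hij.symm)
        (hst h fun k hk => hrC (h2 k hk))
      simpa [hh] using this
    · exact hfl l hl
  obtain ⟨g, rfl⟩ := QuotientGroup.mk_surjective m
  open scoped Pointwise in
  have hgC : (g : G ⧸ H) ∈ C := by
    have hg : g • C = C := by
      rw [← MulAction.mem_stabilizer_iff, htop]; trivial
    rw [← hg]
    exact ⟨((1 : G) : G ⧸ H), ⟨1, K.one_mem, rfl⟩, by simp⟩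
  obtain ⟨k, hk, hkg⟩ := hgC
  exact hm (hkg ▸ h1 k hk)

/-- For a finitely generated group `G` and a finite index subgroup `H`, there is a left
transversal for `H` generating `G` if and only if `[G:H] ≥ d(G)`. -/
theorem stmt_7 {G : Type*} [Group G] [Group.FG G] (H : Subgroup G) (hfin : H.index ≠ 0) :
    (∃ T : Set G, IsLeftTransversal H T ∧ Subgroup.closure T = ⊤) ↔
      Group.rank G ≤ H.index := by
  classical
  haveI : Finite (G ⧸ H) := Nat.finite_of_card_ne_zero hfin
  constructor
  · rintro ⟨T, hT, hcl⟩
    have hinj : Function.Injective (fun t : T => ((t : G) : G ⧸ H)) := by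
      intro s t hst
      have := (hT s).unique ⟨s.2, by simp [H.one_mem]⟩ ⟨t.2, QuotientGroup.eq.1 hst⟩
      exact Subtype.ext this
    haveI : Finite T := Finite.of_injective _ hinj
    have hTf : T.Finite := Set.toFinite T
    calc Group.rank G ≤ hTf.toFinset.card := Group.rank_le (by simpa using hcl)
      _ = Nat.card T := (Nat.card_eq_card_finite_toFinset hTf).symm
      _ ≤ H.index := Nat.card_le_card_of_injective _ hinj
  · intro hle
    let P : Set (G ⧸ H) → Prop := fun A => ∃ f : (G ⧸ H) → G,
      Subgroup.closure (Set.range f) = ⊤ ∧ (Set.range fun l => (f l : G ⧸ H)) = A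
    have hne : {A | P A}.Nonempty := by
      obtain ⟨S, hS, hScl⟩ := Group.rank_spec G
      haveI := Fintype.ofFinite (G ⧸ H)
      have hcard : Fintype.card S ≤ Fintype.card (G ⧸ H) := by
        rw [Fintype.card_coe, hS, ← Nat.card_eq_fintype_card]
        exact hle
      obtain ⟨e⟩ := Function.Embedding.nonempty_of_card_le hcard
      refine ⟨_, Function.extend e (fun s : S => (s : G)) 1, ?_, rfl⟩
      rw [eq_top_iff, ← hScl]
      apply Subgroup.closure_mono
      intro s hs
      exact ⟨e ⟨s, hs⟩, by rw [e.injective.extend_apply]⟩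
    obtain ⟨A, hA⟩ := (Set.toFinite {A | P A}).exists_maximal hne
    obtain ⟨f, hf, hfA⟩ := hA.prop
    have hsurj : Function.Surjective (fun l => (f l : G ⧸ H)) := by
      by_contra hns
      have hni : ¬ Function.Injective (fun l => (f l : G ⧸ H)) := fun hi =>
        hns (Finite.surjective_of_injective hi)
      simp only [Function.Surjective, Function.Injective] at hns hni
      push Not at hns hni
      obtain ⟨m, hm⟩ := hns
      obtain ⟨i, j, hc, hij⟩ := hni
      obtain ⟨f', hf', hlt⟩ := stmt_7_step H f hf i j hij hc m (by
        rintro ⟨l, hl⟩; exact hm l hl)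
      rw [hfA] at hlt
      exact hlt.2 (hA.le_of_ge ⟨f', hf', rfl⟩ hlt.1)
    have hinj := Finite.injective_iff_surjective.2 hsurj
    refine ⟨Set.range f, ?_, hf⟩
    intro g
    obtain ⟨l, hl⟩ := hsurj g
    refine ⟨f l, ⟨⟨l, rfl⟩, QuotientGroup.eq.1 hl.symm⟩, ?_⟩
    rintro _ ⟨⟨l', rfl⟩, hl'⟩
    have : l' = l := hinj ((QuotientGroup.eq.2 hl').symm.trans hl.symm)
    rw [this]
end

section
/- Let G be a group, H a subgroup of finite index in G, and S a generating n-tuple of G such that no two distinct entries of S lie in the same left coset of H, no two distinct entries of S lie in the same right coset of H, and at most one entry of S lies in H. Then there is a left-right transversal T for H in G containing all the entries of S. -/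
open MulAction in
theorem aux_card {G : Type*} [Group G] (H : Subgroup G) (hfin : H.index ≠ 0) (t : G) :
    Nat.card (orbit H (t : G ⧸ H)) = Nat.card (orbit H ((t⁻¹ : G) : G ⧸ H)) := by
  have key : ∀ s : G, Nat.card (orbit H (s : G ⧸ H)) * H.index =
      (H.comap (MulAut.conj s⁻¹).toMonoidHom ⊓ H).index := by
    intro s
    rw [Nat.card_coe_set_eq, ← index_stabilizer]
    have : stabilizer H (s : G ⧸ H) = (H.comap (MulAut.conj s⁻¹).toMonoidHom).subgroupOf H := by
      ext h
      rw [mem_stabilizer_iff, Subgroup.mem_subgroupOf, Subgroup.mem_comap]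
      change ((((h : G) * s : G)) : G ⧸ H) = (s : G ⧸ H) ↔ _
      rw [eq_comm, QuotientGroup.eq]
      simp [mul_assoc]
    rw [this]
    change (H.comap (MulAut.conj s⁻¹).toMonoidHom).relIndex H * _ = _
    rw [← Subgroup.inf_relIndex_right]
    exact Subgroup.relIndex_mul_index inf_le_right
  apply Nat.eq_of_mul_eq_mul_right (Nat.pos_of_ne_zero hfin)
  rw [key, key]
  rw [← Subgroup.index_comap_of_surjective (f := (MulAut.conj t).toMonoidHom) _
    (MulAut.conj t).surjective]
  congr 1
  ext g
  simp [Subgroup.mem_comap, mul_assoc, and_comm]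

/-- Extending a partial matching compatible with two maps with equinumerous fibres. -/
theorem aux_match {A Q ι : Type*} [Finite A] (p q : A → Q)
    (hc : ∀ x, Nat.card {a // p a = x} = Nat.card {a // q a = x})
    (a b : ι → A) (ha : Function.Injective a) (hb : Function.Injective b)
    (hab : ∀ i, p (a i) = q (b i)) :
    ∃ e : A ≃ A, (∀ x, q (e x) = p x) ∧ ∀ i, e (a i) = b i := by
  classical
  have := Fintype.ofFinite A
  have h : ∀ x : Q, ∃ e : {a // p a = x} ≃ {a // q a = x},
      ∀ i (hi : p (a i) = x), e ⟨a i, hi⟩ = ⟨b i, (hab i).symm.trans hi⟩ := by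
    intro x
    obtain ⟨e0⟩ : Nonempty ({a // p a = x} ≃ {a // q a = x}) := Finite.card_eq.mp (hc x)
    let I := {i // p (a i) = x}
    let u : I → {a // p a = x} := fun i => ⟨a i, i.2⟩
    let v : I → {a // q a = x} := fun i => ⟨b i, (hab i).symm.trans i.2⟩
    have hu : Function.Injective u := fun i j h => Subtype.ext (ha (congrArg Subtype.val h))
    have hv : Function.Injective v := fun i j h => Subtype.ext (hb (congrArg Subtype.val h))
    let f := ((Equiv.ofInjective u hu).symm.trans (Equiv.ofInjective v hv))
    let g := f.trans (Equiv.subtypeEquiv e0.symm (q := fun y => y ∈ e0.symm '' Set.range v)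
      (by intro y; simp))
    refine ⟨(Equiv.extendSubtype g).trans e0, ?_⟩
    intro i hi
    rw [Equiv.trans_apply, Equiv.extendSubtype_apply_of_mem g _ ⟨⟨i, hi⟩, rfl⟩]
    have hf : f (Equiv.ofInjective u hu ⟨i, hi⟩) = Equiv.ofInjective v hv ⟨i, hi⟩ := by
      simp only [f, Equiv.trans_apply, Equiv.symm_apply_apply]
    change e0 (e0.symm (f (Equiv.ofInjective u hu ⟨i, hi⟩)).1) = _
    rw [hf, Equiv.apply_symm_apply]
    rfl
  choose e he using h
  refine ⟨(Equiv.sigmaFiberEquiv p).symm.trans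
    ((Equiv.sigmaCongrRight e).trans (Equiv.sigmaFiberEquiv q)), ?_, ?_⟩
  · intro x
    exact (e (p x) ⟨x, rfl⟩).2
  · intro i
    exact congrArg Subtype.val (he (p (a i)) i rfl)

/-- If `H` has finite index in `G` and `S` is a generating `n`-tuple of `G` such that no
two distinct entries lie in the same left coset of `H`, no two distinct entries lie in the
same right coset of `H`, and at most one entry lies in `H`, then there is a left-right
transversal `T` for `H` containing all the entries of `S`. -/
theorem stmt_8 {G : Type*} [Group G] (H : Subgroup G) (hfin : H.index ≠ 0) {n : ℕ}
    (S : Fin n → G) (hS : Subgroup.closure (Set.range S) = ⊤)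
    (hleft : ∀ i j, i ≠ j → (S i)⁻¹ * S j ∉ H)
    (hright : ∀ i j, i ≠ j → S j * (S i)⁻¹ ∉ H)
    (hone : ∀ i j, S i ∈ H → S j ∈ H → i = j) :
    ∃ T : Set G, IsLeftTransversal H T ∧ IsRightTransversal H T ∧ ∀ i, S i ∈ T := by
  classical
  have : Finite (G ⧸ H) :=
    haveI : H.FiniteIndex := ⟨hfin⟩
    Subgroup.finite_quotient_of_finiteIndex
  let p : G ⧸ H → MulAction.orbitRel.Quotient H (G ⧸ H) := fun a => Quotient.mk _ a
  let q : G ⧸ H → MulAction.orbitRel.Quotient H (G ⧸ H) := fun b => p ((b.out⁻¹ : G) : G ⧸ H)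
  have hp : ∀ a b, p a = p b ↔ a ∈ MulAction.orbit H b := fun a b => by
    simp only [p]
    rw [Quotient.eq]
    exact MulAction.orbitRel_apply
  have hp' : ∀ s t : G, p s = p t ↔ ∃ h ∈ H, ∃ k ∈ H, s = h * t * k := by
    intro s t
    rw [hp]
    constructor
    · rintro ⟨h, hh⟩
      change (((h : G) * t : G) : G ⧸ H) = s at hh
      rw [QuotientGroup.eq] at hh
      exact ⟨h, h.2, _, hh, by group⟩
    · rintro ⟨h, hh, k, hk, rfl⟩
      refine ⟨⟨h, hh⟩, ?_⟩
      change (((h : G) * t : G) : G ⧸ H) = _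
      rw [QuotientGroup.eq]
      simpa [mul_assoc] using hk
  have hpi : ∀ s t : G, p (s⁻¹ : G) = p (t⁻¹ : G) ↔ p s = p t := by
    have : ∀ s t : G, p s = p t → p (s⁻¹ : G) = p (t⁻¹ : G) := by
      intro s t h
      rw [hp'] at h ⊢
      obtain ⟨h, hh, k, hk, rfl⟩ := h
      exact ⟨k⁻¹, H.inv_mem hk, h⁻¹, H.inv_mem hh, by group⟩
    intro s t
    exact ⟨fun h => by simpa using this _ _ h, this s t⟩
  have hq : ∀ t : G, q t = p (t⁻¹ : G) := by
    intro t
    simp only [q]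
    rw [hpi]
    congr 1
    exact Quotient.out_eq _
  obtain ⟨e, he, heS⟩ := aux_match p q (by
      intro x
      obtain ⟨x, rfl⟩ := Quotient.exists_rep x
      obtain ⟨t, rfl⟩ := QuotientGroup.mk_surjective x
      change Nat.card {a // p a = p t} = Nat.card {a // q a = p t}
      have h1 : ∀ a, p a = p t ↔ a ∈ MulAction.orbit H (t : G ⧸ H) := fun a => hp _ _
      have h2 : ∀ a, q a = p t ↔ a ∈ MulAction.orbit H ((t⁻¹ : G) : G ⧸ H) := by
        intro a
        obtain ⟨s, rfl⟩ := QuotientGroup.mk_surjective a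
        rw [hq, ← hp, ← hpi, inv_inv]
      simp only [h1, h2]
      exact aux_card H hfin t)
    (fun i => (S i : G ⧸ H)) (fun i => (((S i)⁻¹ : G) : G ⧸ H))
    (by
      intro i j h
      by_contra hij
      exact hleft i j hij (QuotientGroup.eq.mp h))
    (by
      intro i j h
      by_contra hij
      have := QuotientGroup.eq.mp h
      rw [inv_inv] at this
      exact hright j i (Ne.symm hij) this)
    (by intro i; rw [hq, inv_inv])
  have hex : ∀ a : G ⧸ H, ∃ t : G, (t : G ⧸ H) = a ∧ ((t⁻¹ : G) : G ⧸ H) = e a ∧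
      ∀ i, (S i : G ⧸ H) = a → t = S i := by
    intro a
    by_cases h : ∃ i, (S i : G ⧸ H) = a
    · obtain ⟨i, rfl⟩ := h
      refine ⟨S i, rfl, (heS i).symm, ?_⟩
      intro j hj
      by_contra hne
      exact hleft j i (fun h => hne (by rw [h])) (QuotientGroup.eq.mp hj)
    · obtain ⟨s, rfl⟩ := QuotientGroup.mk_surjective a
      obtain ⟨u, hu⟩ := QuotientGroup.mk_surjective (e s)
      have h1 := he s
      rw [← hu, hq, hp'] at h1
      obtain ⟨x, hx, k, hk, h1⟩ := h1
      refine ⟨s * k, ?_, ?_, fun i hi => (h ⟨i, hi⟩).elim⟩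
      · rw [eq_comm, QuotientGroup.eq]; simpa using hk
      · have hu' : u = k⁻¹ * s⁻¹ * x⁻¹ := by rw [← inv_inv u, h1]; group
        rw [← hu, QuotientGroup.eq, hu']
        simpa [mul_assoc] using hx
  choose t ht1 ht2 ht3 using hex
  refine ⟨Set.range t, ?_, ?_, fun i => ⟨S i, ht3 _ i rfl⟩⟩
  · intro g
    refine ⟨t g, ⟨⟨_, rfl⟩, QuotientGroup.eq.mp (ht1 g).symm⟩, ?_⟩
    rintro _ ⟨⟨a, rfl⟩, h⟩
    rw [← QuotientGroup.eq, ht1] at h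
    rw [h]
  · intro g
    have hr : ∀ s : G, s * g⁻¹ ∈ H ↔ ((s⁻¹ : G) : G ⧸ H) = ((g⁻¹ : G) : G ⧸ H) := by
      intro s
      rw [QuotientGroup.eq, inv_inv]
    refine ⟨t (e.symm (g⁻¹ : G)), ⟨⟨_, rfl⟩, ?_⟩, ?_⟩
    · rw [hr, ht2, Equiv.apply_symm_apply]
    · rintro _ ⟨⟨a, rfl⟩, h⟩
      rw [hr, ht2] at h
      rw [← h, Equiv.symm_apply_apply]
end

section
/- Let G be a finitely generated group with d(G) ≤ 3 and let H be a subgroup of finite index in G. Then the following are equivalent: (1) there exists a left-right transversal T for H in G with ⟨T⟩ = G; (2) [G:H] ≥ d(G). -/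
namespace LRT

variable {G : Type*} [Group G]

/-- Partial left-right transversal which generates. -/
def Good (H : Subgroup G) : Prop :=
  ∃ S : Set G, Subgroup.closure S = ⊤ ∧ (∀ x ∈ S, ∀ y ∈ S, x⁻¹ * y ∈ H → x = y) ∧
    (∀ x ∈ S, ∀ y ∈ S, x * y⁻¹ ∈ H → x = y)

def Ok (H : Subgroup G) (x y : G) : Prop := x⁻¹ * y ∉ H ∧ x * y⁻¹ ∉ H

lemma Ok.symm {H : Subgroup G} {x y : G} (h : Ok H x y) : Ok H y x := by
  constructor
  · intro h'
    apply h.1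
    simpa using H.inv_mem h'
  · intro h'
    apply h.2
    simpa using H.inv_mem h'

lemma ok_of_mem {H : Subgroup G} {x y : G} (hx : x ∉ H) (hy : y ∈ H) : Ok H x y := by
  constructor
  · intro h
    exact hx (by simpa using (H.mul_mem_cancel_right hy).1 h)
  · intro h
    exact hx ((H.mul_mem_cancel_right (H.inv_mem hy)).1 h)

lemma gen {A B : Set G} (hA : Subgroup.closure A = ⊤) (h : ∀ x ∈ A, x ∈ Subgroup.closure B) :
    Subgroup.closure B = ⊤ := by
  rw [eq_top_iff, ← hA, Subgroup.closure_le]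
  exact h

lemma good3 {H : Subgroup G} {x y z : G} (hg : Subgroup.closure {x, y, z} = ⊤)
    (h1 : Ok H x y) (h2 : Ok H x z) (h3 : Ok H y z) : Good H := by
  have h1' := h1.symm
  have h2' := h2.symm
  have h3' := h3.symm
  refine ⟨_, hg, ?_, ?_⟩
  · rintro a (rfl | rfl | rfl) b (rfl | rfl | rfl) h <;>
      first | rfl | (exfalso; revert h; first | exact h1.1 | exact h2.1 | exact h3.1 | exact h1'.1 | exact h2'.1 | exact h3'.1)
  · rintro a (rfl | rfl | rfl) b (rfl | rfl | rfl) h <;>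
      first | rfl | (exfalso; revert h; first | exact h1.2 | exact h2.2 | exact h3.2 | exact h1'.2 | exact h2'.2 | exact h3'.2)

lemma good2 {H : Subgroup G} {x y : G} (hg : Subgroup.closure {x, y} = ⊤)
    (h1 : Ok H x y) : Good H := by
  have h1' := h1.symm
  refine ⟨_, hg, ?_, ?_⟩
  · rintro a (rfl | rfl) b (rfl | rfl) h <;>
      first | rfl | (exfalso; revert h; first | exact h1.1 | exact h1'.1)
  · rintro a (rfl | rfl) b (rfl | rfl) h <;>
      first | rfl | (exfalso; revert h; first | exact h1.2 | exact h1'.2)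

lemma step {H : Subgroup G} {x h k : G} (hg : Subgroup.closure {x, h, k} = ⊤)
    (hx : x ∉ H) (hh : h ∈ H) (hk : k ∈ H) (hgood : ¬ Good H) : x * h * x ∈ H := by
  by_contra hc
  apply hgood
  have hB : Subgroup.closure {x, x * h * x, k} = ⊤ := by
    refine gen hg ?_
    have e1 : x ∈ Subgroup.closure {x, x * h * x, k} := Subgroup.subset_closure (by simp)
    have e2 : x * h * x ∈ Subgroup.closure {x, x * h * x, k} := Subgroup.subset_closure (by simp)
    have e3 : k ∈ Subgroup.closure {x, x * h * x, k} := Subgroup.subset_closure (by simp)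
    rintro a (rfl | rfl | rfl)
    · exact e1
    · have := Subgroup.mul_mem _ (Subgroup.mul_mem _ (Subgroup.inv_mem _ e1) e2) (Subgroup.inv_mem _ e1)
      convert this using 1
      group
    · exact e3
  refine good3 hB ⟨?_, ?_⟩ (ok_of_mem hx hk) (ok_of_mem hc hk)
  · intro h'
    apply hx
    have := H.mul_mem (H.inv_mem hh) h'
    convert this using 1
    group
  · intro h'
    apply hx
    have := H.inv_mem (H.mul_mem hh h')
    convert this using 1
    group

lemma caseB {H : Subgroup G} {x h k : G} (hg : Subgroup.closure {x, h, k} = ⊤)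
    (hx : x ∉ H) (hh : h ∈ H) (hk : k ∈ H) (hi : 3 ≤ H.index) : Good H := by
  by_contra hgood
  have s1 := step hg hx hh hk hgood
  have s2 : x * k * x ∈ H := by
    refine step (k := h) ?_ hx hk hh hgood
    rw [← hg]; congr 1; ext; simp; tauto
  have s3 : x * (h * k⁻¹) * x ∈ H := by
    refine step (k := k) (gen hg ?_) hx (H.mul_mem hh (H.inv_mem hk)) hk hgood
    have e1 : x ∈ Subgroup.closure {x, h * k⁻¹, k} := Subgroup.subset_closure (by simp)
    have e2 : h * k⁻¹ ∈ Subgroup.closure {x, h * k⁻¹, k} := Subgroup.subset_closure (by simp)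
    have e3 : k ∈ Subgroup.closure {x, h * k⁻¹, k} := Subgroup.subset_closure (by simp)
    rintro a (rfl | rfl | rfl)
    · exact e1
    · simpa using Subgroup.mul_mem _ e2 e3
    · exact e3
  have s4 : x * x ∈ H := by
    have := H.mul_mem (H.inv_mem (H.mul_mem s1 (H.inv_mem s2))) s3
    convert this using 1
    group
  have s4' : x⁻¹ * x⁻¹ ∈ H := by simpa using H.inv_mem s4
  -- the subgroup A
  let A : Subgroup G := H ⊓ H.comap (MulAut.conj x⁻¹).toMonoidHom
  have memA : ∀ g, g ∈ A ↔ g ∈ H ∧ x⁻¹ * g * x ∈ H := by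
    intro g
    simp [A, Subgroup.mem_inf]
  have c1 : ∀ g ∈ A, x⁻¹ * g * x ∈ A := by
    intro g hgA
    rw [memA] at hgA ⊢
    refine ⟨hgA.2, ?_⟩
    have := H.mul_mem (H.mul_mem s4' hgA.1) s4
    convert this using 1
    group
  have xx : x * x ∈ A := (memA _).2 ⟨s4, by convert s4 using 1; group⟩
  have c2 : ∀ g ∈ A, x * g * x⁻¹ ∈ A := by
    intro g hgA
    have := A.mul_mem (A.mul_mem xx (c1 g hgA)) (A.inv_mem xx)
    convert this using 1
    group
  have inA : ∀ u ∈ H, x * u * x ∈ H → u ∈ A := by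
    intro u hu hxu
    rw [memA]
    refine ⟨hu, ?_⟩
    have := H.mul_mem s4' hxu
    convert this using 1
    group
  have key : ∀ g : G, g ∈ A ∨ x⁻¹ * g ∈ A := by
    intro g
    have hgt : g ∈ Subgroup.closure {x, h, k} := by rw [hg]; trivial
    induction hgt using Subgroup.closure_induction with
    | mem a ha =>
      rcases ha with rfl | rfl | rfl
      · right; simp
      · left; exact inA _ hh s1
      · left; exact inA _ hk s2
    | one => left; exact A.one_mem
    | mul a b _ _ iha ihb =>
      rcases iha with ha | ha <;> rcases ihb with hb | hb
      · left; exact A.mul_mem ha hb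
      · right
        have := A.mul_mem (c1 a ha) hb
        convert this using 1
        group
      · right
        have := A.mul_mem ha hb
        convert this using 1
        group
      · left
        have := A.mul_mem (A.mul_mem (c2 _ ha) xx) hb
        convert this using 1
        group
    | inv a _ iha =>
      rcases iha with ha | ha
      · left; exact A.inv_mem ha
      · right
        have := A.mul_mem (A.inv_mem xx) (c2 _ (A.inv_mem ha))
        convert this using 1
        group
  have hsurj : Function.Surjective (fun b : Bool => if b then ((1 : G) : G ⧸ H) else ((x : G) : G ⧸ H)) := by
    intro q
    induction q using QuotientGroup.induction_on with
    | H g =>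
      rcases key g with h' | h'
      · refine ⟨true, ?_⟩
        simp only [if_true]
        rw [QuotientGroup.eq]
        simpa using ((memA _).1 h').1
      · refine ⟨false, ?_⟩
        simp only [Bool.false_eq_true, if_false]
        rw [QuotientGroup.eq]
        exact ((memA _).1 h').1
  have := Nat.card_le_card_of_surjective _ hsurj
  have h2 : H.index = Nat.card (G ⧸ H) := rfl
  simp at this
  omega

/-- Replacing `y` when `x, y` share a coset. -/
lemma repl {H : Subgroup G} {x y z : G} (hg : Subgroup.closure {x, y, z} = ⊤)
    (hn : ¬ Ok H x y) : ∃ h ∈ H, Subgroup.closure {x, h, z} = ⊤ := by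
  have : x⁻¹ * y ∈ H ∨ x * y⁻¹ ∈ H := by
    unfold Ok at hn; tauto
  rcases this with h | h
  · refine ⟨_, h, gen hg ?_⟩
    have e1 : x ∈ Subgroup.closure {x, x⁻¹ * y, z} := Subgroup.subset_closure (by simp)
    have e2 : x⁻¹ * y ∈ Subgroup.closure {x, x⁻¹ * y, z} := Subgroup.subset_closure (by simp)
    have e3 : z ∈ Subgroup.closure {x, x⁻¹ * y, z} := Subgroup.subset_closure (by simp)
    rintro a (rfl | rfl | rfl)
    · exact e1
    · simpa using Subgroup.mul_mem _ e1 e2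
    · exact e3
  · refine ⟨_, h, gen hg ?_⟩
    have e1 : x ∈ Subgroup.closure {x, x * y⁻¹, z} := Subgroup.subset_closure (by simp)
    have e2 : x * y⁻¹ ∈ Subgroup.closure {x, x * y⁻¹, z} := Subgroup.subset_closure (by simp)
    have e3 : z ∈ Subgroup.closure {x, x * y⁻¹, z} := Subgroup.subset_closure (by simp)
    rintro a (rfl | rfl | rfl)
    · exact e1
    · simpa using Subgroup.mul_mem _ (Subgroup.inv_mem _ e2) e1
    · exact e3

lemma perm1 (x y z : G) : ({x, y, z} : Set G) = {x, z, y} := by ext; simp; tauto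
lemma perm2 (x y z : G) : ({x, y, z} : Set G) = {y, x, z} := by ext; simp; tauto

lemma caseA {H : Subgroup G} {x y h : G} (hg : Subgroup.closure {x, y, h} = ⊤)
    (hx : x ∉ H) (hh : h ∈ H) (hi : 3 ≤ H.index) : Good H := by
  by_cases hy : y ∈ H
  · exact caseB hg hx hy hh hi
  by_cases ho : Ok H x y
  · exact good3 hg ho (ok_of_mem hx hh) (ok_of_mem hy hh)
  · obtain ⟨k, hk, hg'⟩ := repl hg ho
    exact caseB hg' hx hk hh hi

lemma caseC {H : Subgroup G} {x y z : G} (hg : Subgroup.closure {x, y, z} = ⊤)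
    (hx : x ∉ H) (hi : 3 ≤ H.index) : Good H := by
  by_cases hz : z ∈ H
  · exact caseA hg hx hz hi
  by_cases h2 : Ok H x z
  · by_cases h1 : Ok H x y
    · by_cases h3 : Ok H y z
      · exact good3 hg h1 h2 h3
      · rw [perm2, perm1] at hg
        obtain ⟨k, hk, hg'⟩ := repl (x := z) (y := y) (z := x) (H := H) (by rw [← hg]; congr 1; ext; simp; tauto) (fun h => h3 h.symm)
        rw [perm1] at hg'
        exact caseA hg' hz hk hi
    · obtain ⟨k, hk, hg'⟩ := repl hg h1
      rw [perm1] at hg'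
      exact caseA hg' hx hk hi
  · rw [perm1] at hg
    obtain ⟨k, hk, hg'⟩ := repl hg h2
    rw [perm1] at hg'
    exact caseA hg' hx hk hi

lemma three {H : Subgroup G} {x y z : G} (hg : Subgroup.closure {x, y, z} = ⊤)
    (hi : 3 ≤ H.index) : Good H := by
  by_cases hx : x ∈ H
  · by_cases hy : y ∈ H
    · by_cases hz : z ∈ H
      · have : H = ⊤ := by
          rw [eq_top_iff, ← hg, Subgroup.closure_le]
          rintro a (rfl | rfl | rfl) <;> assumption
        subst this
        simp at hi
      · refine caseC (x := z) (y := y) (z := x) ?_ hz hi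
        rw [← hg]; congr 1; ext; simp; tauto
    · rw [perm2] at hg
      exact caseC hg hy hi
  · exact caseC hg hx hi

lemma two {H : Subgroup G} {x y : G} (hg : Subgroup.closure {x, y} = ⊤)
    (hi : 2 ≤ H.index) : Good H := by
  wlog hx : x ∉ H generalizing x y
  · by_cases hy : y ∈ H
    · have : H = ⊤ := by
        rw [eq_top_iff, ← hg, Subgroup.closure_le]
        rintro a (rfl | rfl)
        · exact not_not.1 hx
        · exact hy
      subst this
      simp at hi
    · exact this (x := y) (y := x) (by rw [Set.pair_comm]; exact hg) hy
  by_cases ho : Ok H x y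
  · exact good2 hg ho
  · obtain ⟨k, hk, hg'⟩ := repl (z := x) (by rw [← hg]; congr 1; ext; simp; tauto) ho
    refine good2 (y := k) ?_ (ok_of_mem hx hk)
    rw [← hg']; congr 1; ext; simp; tauto

lemma good_of_rank [Group.FG G] (hrank : Group.rank G ≤ 3)
    (H : Subgroup G) (h : Group.rank G ≤ H.index) : Good H := by
  classical
  obtain ⟨S, hS, hgen⟩ := Group.rank_spec G
  have : S.card ≤ 1 ∨ S.card = 2 ∨ S.card = 3 := by omega
  rcases this with h1 | h2 | h3
  · rw [Finset.card_le_one] at h1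
    exact ⟨S, hgen, fun x hx y hy _ => h1 x hx y hy, fun x hx y hy _ => h1 x hx y hy⟩
  · have hi : 2 ≤ H.index := by omega
    obtain ⟨x, y, _, rfl⟩ := Finset.card_eq_two.1 h2
    exact two (by simpa using hgen) hi
  · have hi : 3 ≤ H.index := by omega
    obtain ⟨x, y, z, _, _, _, rfl⟩ := Finset.card_eq_three.1 h3
    exact three (by simpa using hgen) hi

/-- Abstract matching extension. -/
lemma matching {Q D S : Type*} [Finite Q] (p q : Q → D)
    (hpq : ∀ d, Nat.card {l // p l = d} = Nat.card {r // q r = d})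
    (a b : S → Q) (ha : Function.Injective a) (hb : Function.Injective b)
    (hab : ∀ s, p (a s) = q (b s)) :
    ∃ e : Q → Q, Function.Bijective e ∧ (∀ l, q (e l) = p l) ∧ ∀ s, e (a s) = b s := by
  classical
  have := Fintype.ofFinite Q
  let f : Q → Q := fun l => if h : ∃ s, a s = l then b h.choose else l
  have hf : ∀ s, f (a s) = b s := by
    intro s
    have h : ∃ s', a s' = a s := ⟨s, rfl⟩
    simp only [f, dif_pos h]
    rw [ha h.choose_spec]
  have H : ∀ d, ∃ g : {l // p l = d} ≃ (Finset.univ.filter (fun r => q r = d)),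
      ∀ l : {l // p l = d}, (∃ s, a s = l) → (g l : Q) = f l := by
    intro d
    obtain ⟨g, hg⟩ := Finset.exists_equiv_extend_of_card_eq
      (α := {l // p l = d}) (t := Finset.univ.filter (fun r => q r = d))
      (s := Finset.univ.filter (fun l => ∃ s, a s = (l : Q))) (f := fun l => f l)
      (by
        have := hpq d
        rw [Nat.card_eq_fintype_card, Nat.card_eq_fintype_card] at this
        rw [this, Fintype.card_subtype])
      (by
        intro r hr
        simp only [Finset.mem_image, Finset.mem_filter, Finset.mem_univ, true_and] at hr ⊢
        obtain ⟨l, ⟨s, hs⟩, rfl⟩ := hr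
        rw [← hs, hf, ← hab, hs, l.2])
      (by
        intro l hl l' hl' hll
        simp only [Finset.coe_filter, Finset.mem_univ, true_and, Set.mem_ofPred_eq] at hl hl'
        obtain ⟨s, hs⟩ := hl
        obtain ⟨s', hs'⟩ := hl'
        simp only [← hs, ← hs', hf] at hll
        apply Subtype.ext
        rw [← hs, ← hs', hb hll])
    exact ⟨g, fun l hl => hg l (by simpa using hl)⟩
  choose g hg using H
  have hq : ∀ l, q (g (p l) ⟨l, rfl⟩) = p l := by
    intro l
    exact (Finset.mem_filter.1 (g (p l) ⟨l, rfl⟩).2).2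
  refine ⟨fun l => g (p l) ⟨l, rfl⟩, ?_, hq, ?_⟩
  · rw [← Finite.injective_iff_bijective]
    intro l l' hll
    simp only at hll
    have hp : p l = p l' := by rw [← hq l, ← hq l', hll]
    have aux : ∀ d (hd : p l = d) (hd' : p l' = d), ((g d ⟨l, hd⟩ : Q) = g d ⟨l', hd'⟩) → l = l' := by
      intro d hd hd' h
      have := (g d).injective (Subtype.ext h)
      simpa using this
    refine aux (p l') hp rfl ?_
    rw [← hll]
    have aux2 : ∀ d (hd : p l = d), (g d ⟨l, hd⟩ : Q) = g (p l) ⟨l, rfl⟩ := by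
      rintro d rfl; rfl
    exact aux2 _ hp
  · intro s
    simp only
    rw [hg _ ⟨a s, rfl⟩ ⟨s, rfl⟩]
    exact hf s

lemma orbit_card (H : Subgroup G) (g : G) :
    Nat.card (MulAction.orbit H (g : G ⧸ H)) = (H.map (MulAut.conj g).toMonoidHom).relIndex H := by
  rw [← Nat.card_congr (MulAction.orbitEquivQuotientStabilizer H (g : G ⧸ H)).symm]
  rw [Subgroup.relIndex, Subgroup.index]
  congr 2
  · ext ⟨h, hh⟩
    rw [MulAction.mem_stabilizer_iff, Subgroup.mem_subgroupOf]
    change ((h * g : G) : G ⧸ H) = _ ↔ _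
    rw [eq_comm, QuotientGroup.eq]
    constructor
    · intro h'
      refine ⟨_, h', ?_⟩
      simp [mul_assoc]
    · rintro ⟨k, hk, hk'⟩
      have : g⁻¹ * (h * g) = k := by
        simp at hk'
        rw [← hk']; group
      rw [this]; exact hk

lemma orbit_card_inv (H : Subgroup G) (hfin : H.index ≠ 0) (g : G) :
    Nat.card (MulAction.orbit H (g : G ⧸ H)) = Nat.card (MulAction.orbit H ((g⁻¹ : G) : G ⧸ H)) := by
  rw [orbit_card, orbit_card]
  set K := H.map (MulAut.conj g).toMonoidHom with hK
  have h1 : (H.map (MulAut.conj g⁻¹).toMonoidHom).relIndex H = H.relIndex K := by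
    have hinj : Function.Injective (MulAut.conj g).toMonoidHom := (MulAut.conj g).injective
    rw [← Subgroup.relIndex_map_map_of_injective _ _ hinj, Subgroup.map_map]
    congr 1
    convert Subgroup.map_id H using 2
    ext; simp; group
  have h2 : K.index = H.index := Subgroup.index_map_equiv H (MulAut.conj g)
  rw [h1]
  have e1 := Subgroup.relIndex_mul_index (H := H ⊓ K) (K := K) inf_le_right
  have e2 := Subgroup.relIndex_mul_index (H := H ⊓ K) (K := H) inf_le_left
  rw [Subgroup.inf_relIndex_right, h2] at e1
  rw [Subgroup.inf_relIndex_left] at e2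
  exact Nat.eq_of_mul_eq_mul_right (Nat.pos_of_ne_zero hfin) (e2.trans e1.symm)


lemma mem_orb (H : Subgroup G) (x g : G) :
    (x : G ⧸ H) ∈ MulAction.orbit H (g : G ⧸ H) ↔ ∃ h ∈ H, ∃ k ∈ H, x = h * g * k := by
  constructor
  · rintro ⟨⟨h, hh⟩, e⟩
    change ((h * g : G) : G ⧸ H) = _ at e
    rw [QuotientGroup.eq] at e
    exact ⟨h, hh, _, e, by group⟩
  · rintro ⟨h, hh, k, hk, rfl⟩
    refine ⟨⟨h, hh⟩, ?_⟩
    change ((h * g : G) : G ⧸ H) = _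
    rw [QuotientGroup.eq]
    convert hk using 1; group

/-- Orbit attached to the left coset representing the inverse of a right coset. -/
noncomputable def qm (H : Subgroup G) (r : G ⧸ H) : Set (G ⧸ H) :=
  MulAction.orbit H (((Quotient.out r)⁻¹ : G) : G ⧸ H)

lemma qm_mk (H : Subgroup G) (g : G) :
    qm H (g : G ⧸ H) = MulAction.orbit H ((g⁻¹ : G) : G ⧸ H) := by
  unfold qm
  obtain ⟨k, hk⟩ := QuotientGroup.mk_out_eq_mul H g
  rw [hk, MulAction.orbit_eq_iff, mem_orb]
  exact ⟨(k : G)⁻¹, H.inv_mem k.2, 1, H.one_mem, by simp⟩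

lemma fibers (H : Subgroup G) (hfin : H.index ≠ 0) (d : Set (G ⧸ H)) :
    Nat.card {l : G ⧸ H // MulAction.orbit H l = d} = Nat.card {r // qm H r = d} := by
  by_cases hd : ∃ g : G, MulAction.orbit H (g : G ⧸ H) = d
  · obtain ⟨g, rfl⟩ := hd
    have e1 : ∀ l : G ⧸ H, MulAction.orbit H l = MulAction.orbit H (g : G ⧸ H) ↔
        l ∈ MulAction.orbit H (g : G ⧸ H) := fun l => MulAction.orbit_eq_iff
    have e2 : ∀ r : G ⧸ H, qm H r = MulAction.orbit H (g : G ⧸ H) ↔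
        r ∈ MulAction.orbit H ((g⁻¹ : G) : G ⧸ H) := by
      intro r
      induction r using QuotientGroup.induction_on with
      | H x =>
        rw [qm_mk, MulAction.orbit_eq_iff, mem_orb, mem_orb]
        constructor
        · rintro ⟨h, hh, k, hk, e⟩
          refine ⟨k⁻¹, H.inv_mem hk, h⁻¹, H.inv_mem hh, ?_⟩
          rw [← inv_inv x, e]; group
        · rintro ⟨h, hh, k, hk, e⟩
          refine ⟨k⁻¹, H.inv_mem hk, h⁻¹, H.inv_mem hh, ?_⟩
          rw [e]; group
    rw [Nat.card_congr (Equiv.subtypeEquivRight e1), Nat.card_congr (Equiv.subtypeEquivRight e2)]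
    exact orbit_card_inv H hfin g
  · have i1 : IsEmpty {l : G ⧸ H // MulAction.orbit H l = d} := by
      constructor
      rintro ⟨l, hl⟩
      induction l using QuotientGroup.induction_on with
      | H x => exact hd ⟨x, hl⟩
    have i2 : IsEmpty {r // qm H r = d} := by
      constructor
      rintro ⟨r, hr⟩
      exact hd ⟨_, hr⟩
    simp

lemma exists_rep (H : Subgroup G) (l r : G ⧸ H) (h : qm H r = MulAction.orbit H l) :
    ∃ t : G, (t : G ⧸ H) = l ∧ ((t⁻¹ : G) : G ⧸ H) = r := by
  induction l using QuotientGroup.induction_on with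
  | H g =>
    induction r using QuotientGroup.induction_on with
    | H x =>
      rw [qm_mk, MulAction.orbit_eq_iff, mem_orb] at h
      obtain ⟨h, hh, k, hk, e⟩ := h
      refine ⟨g * k, ?_, ?_⟩
      · rw [QuotientGroup.eq]
        simpa using hk
      · rw [QuotientGroup.eq]
        have : (g * k)⁻¹⁻¹ * x = h⁻¹ := by
          rw [← inv_inv x, e]; group
        rw [this]
        exact H.inv_mem hh

lemma extend (H : Subgroup G) (hfin : H.index ≠ 0) (hgood : Good H) :
    ∃ T : Set G, IsLeftTransversal H T ∧ IsRightTransversal H T ∧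
      Subgroup.closure T = ⊤ := by
  classical
  obtain ⟨S, hS, hl, hr⟩ := hgood
  have : Finite (G ⧸ H) := Nat.finite_of_card_ne_zero hfin
  have ha : Function.Injective (fun s : S => ((s : G) : G ⧸ H)) := by
    intro s s' h
    exact Subtype.ext (hl _ s.2 _ s'.2 (QuotientGroup.eq.1 h))
  have hb : Function.Injective (fun s : S => (((s : G)⁻¹ : G) : G ⧸ H)) := by
    intro s s' h
    have := QuotientGroup.eq.1 h
    rw [inv_inv] at this
    exact Subtype.ext (hr _ s.2 _ s'.2 this)
  obtain ⟨e, he, hqe, hes⟩ := matching (fun l : G ⧸ H => MulAction.orbit H l) (qm H)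
    (fibers H hfin) _ _ ha hb (by intro s; simp [qm_mk])
  have ht : ∀ l : G ⧸ H, ∃ t : G, (t : G ⧸ H) = l ∧ ((t⁻¹ : G) : G ⧸ H) = e l ∧
      ∀ s ∈ S, ((s : G) : G ⧸ H) = l → t = s := by
    intro l
    by_cases h : ∃ s ∈ S, ((s : G) : G ⧸ H) = l
    · obtain ⟨s, hs, rfl⟩ := h
      refine ⟨s, rfl, (hes ⟨s, hs⟩).symm, ?_⟩
      intro s' hs' h'
      exact (hl _ hs' _ hs (QuotientGroup.eq.1 h')).symm
    · obtain ⟨t, h1, h2⟩ := exists_rep H l (e l) (hqe l)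
      exact ⟨t, h1, h2, fun s hs h' => (h ⟨s, hs, h'⟩).elim⟩
  choose t t1 t2 t3 using ht
  refine ⟨Set.range t, ?_, ?_, ?_⟩
  · intro g
    refine ⟨t g, ⟨⟨_, rfl⟩, QuotientGroup.eq.1 (t1 g).symm⟩, ?_⟩
    rintro _ ⟨⟨l, rfl⟩, h⟩
    rw [← QuotientGroup.eq, t1] at h
    rw [h]
  · intro g
    obtain ⟨l, hl'⟩ := he.2 ((g⁻¹ : G) : G ⧸ H)
    refine ⟨t l, ⟨⟨_, rfl⟩, ?_⟩, ?_⟩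
    · have := (t2 l).trans hl'
      rw [QuotientGroup.eq, inv_inv] at this
      exact this
    · rintro _ ⟨⟨l', rfl⟩, h⟩
      have h' : (((t l')⁻¹ : G) : G ⧸ H) = ((g⁻¹ : G) : G ⧸ H) := by
        rw [QuotientGroup.eq, inv_inv]; exact h
      rw [t2, ← hl'] at h'
      rw [he.1 h']
  · rw [eq_top_iff, ← hS]
    apply Subgroup.closure_mono
    intro s hs
    exact ⟨_, t3 _ s hs rfl⟩

lemma rank_le_index [Group.FG G] (H : Subgroup G) (hfin : H.index ≠ 0) (T : Set G)
    (hT : IsLeftTransversal H T) (hg : Subgroup.closure T = ⊤) : Group.rank G ≤ H.index := by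
  classical
  have : Finite (G ⧸ H) := Nat.finite_of_card_ne_zero hfin
  have hinj : Function.Injective (fun s : T => ((s : G) : G ⧸ H)) := by
    intro s s' h
    have h := QuotientGroup.eq.1 h
    exact Subtype.ext ((hT s).unique ⟨s.2, by simp⟩ ⟨s'.2, h⟩)
  have hf : Finite T := Finite.of_injective _ hinj
  have := Fintype.ofFinite T
  have h1 : Group.rank G ≤ T.toFinset.card := Group.rank_le (by simpa using hg)
  have h2 := Nat.card_le_card_of_injective _ hinj
  rw [Nat.card_eq_fintype_card, ← Set.toFinset_card] at h2
  exact h1.trans h2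

end LRT

/-- For a finitely generated group `G` with `d(G) ≤ 3` and a finite index subgroup `H`,
there is a left-right transversal for `H` generating `G` if and only if `[G:H] ≥ d(G)`. -/
theorem stmt_10 {G : Type*} [Group G] [Group.FG G] (hrank : Group.rank G ≤ 3)
    (H : Subgroup G) (hfin : H.index ≠ 0) :
    (∃ T : Set G, IsLeftTransversal H T ∧ IsRightTransversal H T ∧
      Subgroup.closure T = ⊤) ↔ Group.rank G ≤ H.index := by
  constructor
  · rintro ⟨T, hT, _, hg⟩
    exact LRT.rank_le_index H hfin T hT hg
  · intro h
    exact LRT.extend H hfin (LRT.good_of_rank hrank H h)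
end

section
/- Let G be a group with d(G) = n, and let H be a subgroup of finite index in G with [G:H] < n + 2^n. Then at least one of the following holds: (1) H contains at least one primitive element of G; (2) H contains the square of every primitive element of G. -/
/-- A primitive element of a group `G` of finite rank: an element belonging to some
generating set of `G` of size exactly `d(G)`. -/
def IsPrimitive (G : Type*) [Group G] [Group.FG G] (g : G) : Prop :=
  ∃ S : Finset G, g ∈ S ∧ S.card = Group.rank G ∧ Subgroup.closure (S : Set G) = ⊤

/-- Replacing a generator by a suitable double-sided translate gives a primitive element. -/
theorem isPrimitive_of_mul {G : Type*} [Group G] [Group.FG G] [DecidableEq G] (S : Finset G)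
    (hcard : S.card = Group.rank G) (hcl : Subgroup.closure (S : Set G) = ⊤) (x : G) (hx : x ∈ S)
    (k k' : G) (hk : k ∈ Subgroup.closure ((S.erase x : Finset G) : Set G))
    (hk' : k' ∈ Subgroup.closure ((S.erase x : Finset G) : Set G)) :
    IsPrimitive G (k'⁻¹ * x * k) := by
  set y := k'⁻¹ * x * k with hy
  have hle : Subgroup.closure ((S.erase x : Finset G) : Set G) ≤
      Subgroup.closure ((insert y (S.erase x) : Finset G) : Set G) :=
    Subgroup.closure_mono (by exact_mod_cast Finset.subset_insert y (S.erase x))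
  have htop : Subgroup.closure ((insert y (S.erase x) : Finset G) : Set G) = ⊤ := by
    rw [eq_top_iff, ← hcl, Subgroup.closure_le]
    intro z hz
    by_cases hzx : z = x
    · subst hzx
      have h1 : y ∈ Subgroup.closure ((insert y (S.erase z) : Finset G) : Set G) :=
        Subgroup.subset_closure (by simp)
      have h2 : z = k' * y * k⁻¹ := by rw [hy]; group
      have h3 := mul_mem (mul_mem (hle hk') h1) (inv_mem (hle hk))
      rw [← h2] at h3
      exact h3
    · exact hle (Subgroup.subset_closure (by simpa [hzx] using hz))
  refine ⟨insert y (S.erase x), by simp, ?_, htop⟩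
  apply le_antisymm
  · have h1 := Finset.card_insert_le y (S.erase x)
    have h2 := Finset.card_erase_add_one hx
    omega
  · exact Group.rank_le htop

theorem card_cosets_bound {G : Type*} [Group G] [Group.FG G] [DecidableEq G] (H : Subgroup G)
    (hfin : H.index ≠ 0) (hno : ∀ g ∈ H, ¬ IsPrimitive G g) (S : Finset G)
    (hcard : S.card = Group.rank G) (hcl : Subgroup.closure (S : Set G) = ⊤) (g : G) (hg : g ∈ S)
    (hg2 : g ^ 2 ∉ H) (T : Finset G) (hT : T ⊆ S.erase g) :
    3 * 2 ^ T.card ≤ Set.ncard ((QuotientGroup.mk : G → G ⧸ H) ''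
      (Subgroup.closure ((insert g T : Finset G) : Set G) : Set G)) := by
  have hF : Finite (G ⧸ H) := by
    have : H.FiniteIndex := ⟨hfin⟩
    infer_instance
  induction T using Finset.induction_on with
  | empty =>
    have hg1 : g ∉ H := fun h => hno g h ⟨S, hg, hcard, hcl⟩
    have hgc : g ∈ Subgroup.closure ((insert g ∅ : Finset G) : Set G) :=
      Subgroup.subset_closure (by simp)
    have h3 : Set.ncard ({((1 : G) : G ⧸ H), ((g : G) : G ⧸ H), ((g ^ 2 : G) : G ⧸ H)} :
        Set (G ⧸ H)) = 3 := by
      rw [Set.ncard_eq_three]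
      refine ⟨_, _, _, ?_, ?_, ?_, rfl⟩
      · rw [Ne, QuotientGroup.eq]; simpa using hg1
      · rw [Ne, QuotientGroup.eq]; simpa using hg2
      · rw [Ne, QuotientGroup.eq]
        have : g⁻¹ * g ^ 2 = g := by group
        rwa [this]
    rw [Finset.card_empty, pow_zero, mul_one, ← h3]
    apply Set.ncard_le_ncard _ (Set.toFinite _)
    rintro _ (rfl | rfl | rfl)
    · exact ⟨1, one_mem _, rfl⟩
    · exact ⟨g, hgc, rfl⟩
    · exact ⟨g ^ 2, pow_mem hgc 2, rfl⟩
  | insert x T hxT ih =>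
    have hT' : T ⊆ S.erase g := fun z hz => hT (Finset.mem_insert_of_mem hz)
    specialize ih hT'
    have hxS := hT (Finset.mem_insert_self x T)
    rw [Finset.mem_erase] at hxS
    set A : Set (G ⧸ H) := (QuotientGroup.mk : G → G ⧸ H) ''
      (Subgroup.closure ((insert g T : Finset G) : Set G) : Set G) with hA
    set B : Set (G ⧸ H) := (fun q => x • q) '' A with hB
    have hBA : B.ncard = A.ncard := Set.ncard_image_of_injective _ (MulAction.injective x)
    have hsub : Subgroup.closure ((insert g T : Finset G) : Set G) ≤
        Subgroup.closure ((S.erase x : Finset G) : Set G) := by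
      apply Subgroup.closure_mono
      intro z hz
      simp only [Finset.coe_insert, Set.mem_insert_iff, Finset.mem_coe] at hz
      simp only [Finset.mem_coe, Finset.mem_erase]
      rcases hz with rfl | hz
      · exact ⟨fun h => hxS.1 h.symm, hg⟩
      · exact ⟨fun h => hxT (h ▸ hz), (Finset.mem_erase.1 (hT' hz)).2⟩
    have hdisj : Disjoint A B := by
      rw [Set.disjoint_left]
      rintro _ ⟨k', hk', rfl⟩ ⟨_, ⟨k, hk, rfl⟩, h⟩
      have h' : ((k' : G) : G ⧸ H) = ((x * k : G) : G ⧸ H) := h.symm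
      rw [QuotientGroup.eq, ← mul_assoc] at h'
      exact hno _ h' (isPrimitive_of_mul S hcard hcl x hxS.2 k k' (hsub hk) (hsub hk'))
    have hle : Subgroup.closure ((insert g T : Finset G) : Set G) ≤
        Subgroup.closure ((insert g (insert x T) : Finset G) : Set G) := by
      apply Subgroup.closure_mono
      intro z hz
      simp only [Finset.coe_insert, Set.mem_insert_iff, Finset.mem_coe] at hz ⊢
      tauto
    have hx : x ∈ Subgroup.closure ((insert g (insert x T) : Finset G) : Set G) :=
      Subgroup.subset_closure (by simp)
    have hAB := Set.ncard_union_eq hdisj (Set.toFinite _) (Set.toFinite _)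
    rw [Finset.card_insert_of_notMem hxT, pow_succ]
    calc 3 * (2 ^ T.card * 2) ≤ (A ∪ B).ncard := by omega
      _ ≤ _ := by
        apply Set.ncard_le_ncard _ (Set.toFinite _)
        rintro _ (⟨k, hk, rfl⟩ | ⟨_, ⟨k, hk, rfl⟩, rfl⟩)
        · exact ⟨k, hle hk, rfl⟩
        · exact ⟨x * k, mul_mem hx (hle hk), rfl⟩

/-- If `d(G) = n` and `H` is a subgroup of finite index with `[G:H] < n + 2^n`, then
either `H` contains a primitive element of `G`, or `H` contains the square of every
primitive element of `G`. -/
theorem stmt_13 {G : Type*} [Group G] [Group.FG G] (n : ℕ) (hrank : Group.rank G = n)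
    (H : Subgroup G) (hfin : H.index ≠ 0) (hidx : H.index < n + 2 ^ n) :
    (∃ g ∈ H, IsPrimitive G g) ∨ (∀ g : G, IsPrimitive G g → g ^ 2 ∈ H) := by
  classical
  by_contra hcon
  push Not at hcon
  obtain ⟨hno, g, ⟨S, hg, hcard, hcl⟩, hg2⟩ := hcon
  have hF : Finite (G ⧸ H) := by
    have : H.FiniteIndex := ⟨hfin⟩
    infer_instance
  have h := card_cosets_bound H hfin hno S hcard hcl g hg hg2 (S.erase g) subset_rfl
  have h2 := h.trans (Set.ncard_le_card _)
  change _ ≤ H.index at h2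
  have h3 := Finset.card_erase_add_one hg
  have h4 : (S.erase g).card < 2 ^ (S.erase g).card := Nat.lt_two_pow_self
  have h5 : n = (S.erase g).card + 1 := by omega
  rw [h5, pow_succ] at hidx
  omega
end

section
/- Let G be a finitely generated group with d(G) = n and let H be a subgroup of G. Then H contains the square of every primitive element of G if and only if H is normal in G and the quotient G/H is isomorphic to C_2^m for some m ≤ n. -/
theorem IsPrimitive.conj_aux {G : Type*} [Group G] [Group.FG G] {g : G} (h : IsPrimitive G g)
    (c : G) : IsPrimitive G (c * g * c⁻¹) := by
  obtain ⟨S, hg, hc, hS⟩ := h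
  refine ⟨S.map (MulAut.conj c).toEquiv.toEmbedding, ?_, by simpa using hc, ?_⟩
  · rw [Finset.mem_map]
    exact ⟨g, hg, by simp⟩
  · have := MonoidHom.map_closure (MulAut.conj c).toMonoidHom (S : Set G)
    rw [hS, Subgroup.map_top_of_surjective _ (MulAut.conj c).surjective] at this
    rw [this, Finset.coe_map]
    rfl

theorem primitive_mul_aux {G : Type*} [Group G] [Group.FG G] {S : Finset G}
    (hc : S.card = Group.rank G) (hS : Subgroup.closure (S : Set G) = ⊤) {x y : G}
    (hx : x ∈ S) (hy : y ∈ S) (hxy : x ≠ y) : IsPrimitive G (x * y) := by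
  classical
  have hcl : Subgroup.closure ((insert (x * y) (S.erase y) : Finset G) : Set G) = ⊤ := by
    rw [eq_top_iff, ← hS, Subgroup.closure_le]
    intro z hz
    have hmem : ∀ w ∈ insert (x * y) (S.erase y),
        w ∈ Subgroup.closure ((insert (x * y) (S.erase y) : Finset G) : Set G) :=
      fun w hw => Subgroup.subset_closure (by exact_mod_cast hw)
    by_cases hzy : z = y
    · subst hzy
      have h1 := hmem x (by simp [hx, hxy])
      have h2 := hmem (x * z) (by simp)
      have h3 := mul_mem (inv_mem h1) h2
      rwa [inv_mul_cancel_left] at h3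
    · exact hmem z (by simp [hzy]; exact Or.inr hz)
  refine ⟨_, Finset.mem_insert_self _ _, le_antisymm ?_ (Group.rank_le hcl), hcl⟩
  refine (Finset.card_insert_le _ _).trans ?_
  rw [Finset.card_erase_add_one hy, hc]

theorem all_sq_aux {G : Type*} [Group G] [Group.FG G] (H : Subgroup G)
    (h : ∀ g : G, IsPrimitive G g → g ^ 2 ∈ H) (g : G) : g ^ 2 ∈ H := by
  obtain ⟨S, hc, hS⟩ := Group.rank_spec G
  let T : Set G := {a | ∃ p, IsPrimitive G p ∧ a = p ^ 2}
  let N := Subgroup.normalClosure T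
  have hNH : N ≤ H := by
    refine (Subgroup.closure_le _).2 ?_
    intro a ha
    obtain ⟨b, ⟨p, hp, rfl⟩, hb⟩ := Group.mem_conjugatesOfSet_iff.1 ha
    obtain ⟨c, rfl⟩ := isConj_iff.1 hb
    have := h _ (hp.conj_aux c)
    rwa [conj_pow] at this
  apply hNH
  have hq : ∀ p : G, IsPrimitive G p → ((p : G ⧸ N)) ^ 2 = 1 := by
    intro p hp
    rw [← QuotientGroup.mk_pow, QuotientGroup.eq_one_iff]
    exact Subgroup.subset_normalClosure ⟨p, hp, rfl⟩
  have hcomm : ∀ x ∈ S, ∀ y ∈ S, (x : G ⧸ N) * y = y * x := by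
    intro x hx y hy
    by_cases hxy : x = y
    · rw [hxy]
    have h1 := hq x ⟨S, hx, hc, hS⟩
    have h2 := hq y ⟨S, hy, hc, hS⟩
    have h3 := hq _ (primitive_mul_aux hc hS hx hy hxy)
    rw [QuotientGroup.mk_mul] at h3
    rw [pow_two, mul_eq_one_iff_eq_inv] at h1 h2 h3
    rw [h3, mul_inv_rev, ← h1, ← h2]
  have hcent1 : ∀ x ∈ S, ∀ z : G, (x : G ⧸ N) * z = z * x := by
    intro x hx z
    have hz : z ∈ Subgroup.closure (S : Set G) := hS ▸ Subgroup.mem_top z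
    induction hz using Subgroup.closure_induction with
    | mem y hy => exact hcomm x hx y hy
    | one => simp
    | mul a b _ _ iha ihb =>
      exact Commute.mul_right (a := (x : G ⧸ N)) iha ihb
    | inv a _ iha => exact Commute.inv_right (a := (x : G ⧸ N)) iha
  rw [← QuotientGroup.eq_one_iff, QuotientGroup.mk_pow]
  have hcent : ∀ w z : G, (w : G ⧸ N) * z = z * w := by
    intro w z
    have hw : w ∈ Subgroup.closure (S : Set G) := hS ▸ Subgroup.mem_top w
    induction hw using Subgroup.closure_induction with
    | mem y hy => exact hcent1 y hy z
    | one => simp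
    | mul a b _ _ iha ihb =>
      exact Commute.mul_left (a := (a : G ⧸ N)) iha ihb
    | inv a _ iha => exact Commute.inv_left (a := (a : G ⧸ N)) iha
  have hg : g ∈ Subgroup.closure (S : Set G) := hS ▸ Subgroup.mem_top g
  induction hg using Subgroup.closure_induction with
  | mem y hy => exact hq y ⟨S, hy, hc, hS⟩
  | one => simp
  | mul a b _ _ iha ihb =>
    rw [QuotientGroup.mk_mul, Commute.mul_pow (hcent a b), iha, ihb, one_mul]
  | inv a _ iha => rw [QuotientGroup.mk_inv, inv_pow, iha, inv_one]

theorem normal_of_sq_aux {G : Type*} [Group G] (H : Subgroup G)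
    (h : ∀ g : G, g ^ 2 ∈ H) : H.Normal := by
  refine ⟨fun x hx g => ?_⟩
  have : g * x * g⁻¹ = (g * x) ^ 2 * x⁻¹ * (g ^ 2)⁻¹ := by
    simp only [pow_two]; group
  rw [this]
  exact mul_mem (mul_mem (h _) (inv_mem hx)) (inv_mem (h _))

theorem exists_hom_aux {Q : Type*} [CommGroup Q] (h : ∀ q : Q, q ^ 2 = 1) (S : Finset Q)
    (hS : Subgroup.closure (S : Set Q) = ⊤) :
    ∃ m ≤ S.card, Nonempty (Q ≃* Multiplicative (Fin m → ZMod 2)) := by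
  letI : Module (ZMod 2) (Additive Q) := AddCommGroup.zmodModule (n := 2) (fun x => h x.toMul)
  let S' : Finset (Additive Q) := S.map Additive.ofMul.toEmbedding
  have hsp : Submodule.span (ZMod 2) (S' : Set (Additive Q)) = ⊤ := by
    rw [eq_top_iff]
    rintro x -
    have hx : x.toMul ∈ Subgroup.closure (S : Set Q) := hS ▸ Subgroup.mem_top _
    have key : ∀ q ∈ Subgroup.closure (S : Set Q),
        Additive.ofMul q ∈ Submodule.span (ZMod 2) (S' : Set (Additive Q)) := by
      intro q hq
      induction hq using Subgroup.closure_induction with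
      | mem y hy => exact Submodule.subset_span (by simpa [S'] using hy)
      | one => exact zero_mem _
      | mul a b _ _ iha ihb => exact add_mem iha ihb
      | inv a _ iha => exact neg_mem iha
    exact key _ hx
  haveI : Module.Finite (ZMod 2) (Additive Q) := ⟨⟨S', hsp⟩⟩
  refine ⟨Module.finrank (ZMod 2) (Additive Q), ?_, ⟨?_⟩⟩
  · have := finrank_span_finset_le_card (R := ZMod 2) S'
    rw [Set.finrank, hsp, finrank_top] at this
    simpa [S'] using this
  · exact AddEquiv.toMultiplicativeRight
      (Module.finBasis (ZMod 2) (Additive Q)).equivFun.toAddEquiv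

/-- If `d(G) = n` and `H ≤ G`, then `H` contains the square of every primitive element of
`G` if and only if `H` is normal in `G` and `G ⧸ H ≅ C₂^m` for some `m ≤ n` (expressed via
a surjective homomorphism onto `C₂^m` with kernel `H`). -/
theorem stmt_14 {G : Type*} [Group G] [Group.FG G] (n : ℕ) (hrank : Group.rank G = n)
    (H : Subgroup G) :
    (∀ g : G, IsPrimitive G g → g ^ 2 ∈ H) ↔
      (H.Normal ∧ ∃ m ≤ n, ∃ φ : G →* Multiplicative (Fin m → ZMod 2),
        Function.Surjective φ ∧ φ.ker = H) := by
  classical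
  constructor
  · intro h
    have hsq := all_sq_aux H h
    have hN := normal_of_sq_aux H hsq
    refine ⟨hN, ?_⟩
    obtain ⟨S, hc, hS⟩ := Group.rank_spec G
    have hQ : ∀ q : G ⧸ H, q ^ 2 = 1 := by
      intro q
      induction q using QuotientGroup.induction_on with
      | H z => rw [← QuotientGroup.mk_pow, QuotientGroup.eq_one_iff]; exact hsq z
    letI : CommGroup (G ⧸ H) :=
      { (inferInstance : Group (G ⧸ H)) with
        mul_comm := fun a b => by
          have h1 := hQ a
          have h2 := hQ b
          have h3 := hQ (a * b)
          rw [pow_two, mul_eq_one_iff_eq_inv] at h1 h2 h3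
          rw [h3, mul_inv_rev, ← h1, ← h2] }
    have hcl : Subgroup.closure ((S.image (QuotientGroup.mk' H) : Finset (G ⧸ H)) :
        Set (G ⧸ H)) = ⊤ := by
      rw [Finset.coe_image, ← MonoidHom.map_closure, hS]
      exact Subgroup.map_top_of_surjective _ (QuotientGroup.mk'_surjective H)
    obtain ⟨m, hm, ⟨e⟩⟩ := exists_hom_aux hQ _ hcl
    refine ⟨m, ?_, e.toMonoidHom.comp (QuotientGroup.mk' H), ?_, ?_⟩
    · rw [← hrank, ← hc]
      exact hm.trans Finset.card_image_le
    · exact e.surjective.comp (QuotientGroup.mk'_surjective H)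
    · ext x
      simp [MonoidHom.mem_ker]
  · rintro ⟨-, m, -, φ, -, rfl⟩ g -
    rw [MonoidHom.mem_ker, map_pow]
    apply Multiplicative.toAdd.injective
    funext i
    rw [toAdd_pow]
    simp only [Pi.smul_apply, toAdd_one, Pi.zero_apply]
    rw [two_nsmul]
    exact CharTwo.add_self_eq_zero _
end

section
/- Let G be a group with d(G) = n and let H be a subgroup of finite index in G with [G:H] < n + 2^n. Then H contains no primitive element of G if and only if H is normal in G and the quotient G/H is isomorphic to C_2^n; moreover, in that case every left coset of H other than H itself contains a primitive element of G. -/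
lemma isPrimitive_of_tuple {G : Type*} [Group G] [Group.FG G] {n : ℕ} (hrank : Group.rank G = n)
    (x : Fin n → G) (hx : Subgroup.closure (Set.range x) = ⊤) (i : Fin n) :
    IsPrimitive G (x i) := by
  classical
  have hc : Subgroup.closure ((Finset.univ.image x : Finset G) : Set G) = ⊤ := by
    simpa using hx
  refine ⟨Finset.univ.image x, by simp, ?_, hc⟩
  apply le_antisymm
  · rw [hrank]
    exact Finset.card_image_le.trans (by simp)
  · exact Group.rank_le hc

lemma isPrimitive_conj {G : Type*} [Group G] [Group.FG G] (a g : G) (h : IsPrimitive G g) :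
    IsPrimitive G (a⁻¹ * g * a) := by
  classical
  obtain ⟨S, hg, hc, hS⟩ := h
  refine ⟨S.map (MulAut.conj a⁻¹).toEquiv.toEmbedding, ?_, by simpa using hc, ?_⟩
  · rw [Finset.mem_map]
    exact ⟨g, hg, by simp⟩
  · have := (MulAut.conj a⁻¹).toMonoidHom.map_closure (S : Set G)
    rw [hS, Subgroup.map_top_of_surjective _ (MulAut.conj a⁻¹).surjective] at this
    rw [this]
    congr 1
    simp

/-- the subgroup generated by a part of a tuple -/
def partGen {G : Type*} [Group G] {n : ℕ} (x : Fin n → G) (T : Finset (Fin n)) : Subgroup G :=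
  Subgroup.closure (x '' T)

lemma partGen_mono {G : Type*} [Group G] {n : ℕ} (x : Fin n → G) {T U : Finset (Fin n)}
    (h : T ⊆ U) : partGen x T ≤ partGen x U :=
  Subgroup.closure_mono (Set.image_mono (by exact_mod_cast h))

lemma mem_partGen {G : Type*} [Group G] {n : ℕ} (x : Fin n → G) {T : Finset (Fin n)}
    {i : Fin n} (h : i ∈ T) : x i ∈ partGen x T :=
  Subgroup.subset_closure ⟨i, by exact_mod_cast h, rfl⟩

lemma isPrimitive_mul {G : Type*} [Group G] [Group.FG G] {n : ℕ} (hrank : Group.rank G = n)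
    (x : Fin n → G) (hx : Subgroup.closure (Set.range x) = ⊤) (i : Fin n) (w : G)
    (T : Finset (Fin n)) (hT : i ∉ T) (hw : w ∈ partGen x T) :
    IsPrimitive G (w * x i) := by
  classical
  have key : Subgroup.closure (Set.range (Function.update x i (w * x i))) = ⊤ := by
    set y := Function.update x i (w * x i) with hy
    have h1 : partGen x T ≤ Subgroup.closure (Set.range y) := by
      apply Subgroup.closure_mono
      rintro _ ⟨j, hj, rfl⟩
      refine ⟨j, ?_⟩
      have : j ≠ i := by
        rintro rfl
        exact hT (by exact_mod_cast hj)
      simp [hy, this]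
    rw [eq_top_iff, ← hx, Subgroup.closure_le]
    rintro _ ⟨j, rfl⟩
    have hyj : y j ∈ Subgroup.closure (Set.range y) := Subgroup.subset_closure ⟨j, rfl⟩
    by_cases hj : j = i
    · subst hj
      have h2 := Subgroup.mul_mem _ (Subgroup.inv_mem _ (h1 hw)) hyj
      simpa [hy] using h2
    · simpa [hy, hj] using hyj
  simpa using isPrimitive_of_tuple hrank _ key i

section action

variable {G : Type*} [Group G] {n : ℕ} (x : Fin n → G) (H : Subgroup G)

/-- Orbit of a coset under the subgroup generated by a part of the tuple. -/
def porb (T : Finset (Fin n)) (q : G ⧸ H) : Set (G ⧸ H) :=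
  {r | ∃ w ∈ partGen x T, w • q = r}

variable {H}

lemma porb_self (T : Finset (Fin n)) (q : G ⧸ H) : q ∈ porb x H T q :=
  ⟨1, Subgroup.one_mem _, one_smul _ _⟩

lemma porb_smul {T : Finset (Fin n)} {q r : G ⧸ H} (h : r ∈ porb x H T q) {w : G}
    (hw : w ∈ partGen x T) : w • r ∈ porb x H T q := by
  obtain ⟨v, hv, rfl⟩ := h
  exact ⟨w * v, Subgroup.mul_mem _ hw hv, mul_smul _ _ _⟩

lemma porb_symm {T : Finset (Fin n)} {q r : G ⧸ H} (h : r ∈ porb x H T q) :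
    q ∈ porb x H T r := by
  obtain ⟨v, hv, rfl⟩ := h
  exact ⟨v⁻¹, Subgroup.inv_mem _ hv, inv_smul_smul _ _⟩

lemma porb_trans {T : Finset (Fin n)} {q r s : G ⧸ H} (h : r ∈ porb x H T q)
    (h' : s ∈ porb x H T r) : s ∈ porb x H T q := by
  obtain ⟨v, hv, rfl⟩ := h'
  exact porb_smul x h hv

lemma porb_disj {T : Finset (Fin n)} {q r : G ⧸ H} (h : r ∉ porb x H T q) :
    Disjoint (porb x H T q) (porb x H T r) := by
  rw [Set.disjoint_left]
  intro s h1 h2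
  exact h (porb_trans x h1 (porb_symm x h2))

/-- the fixed point freeness condition -/
def Free (x : Fin n → G) (H : Subgroup G) : Prop :=
  ∀ (i : Fin n) (T : Finset (Fin n)), i ∉ T → ∀ q : G ⧸ H, x i • q ∉ porb x H T q

lemma card_porb [Finite (G ⧸ H)] (hF : Free x H) (T : Finset (Fin n)) :
    ∀ q : G ⧸ H, 2 ^ T.card ≤ (porb x H T q).ncard := by
  classical
  induction T using Finset.induction_on with
  | empty =>
    intro q
    simp only [Finset.card_empty, pow_zero]
    exact (Set.ncard_pos (Set.toFinite _)).2 ⟨q, porb_self x _ q⟩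
  | insert i T hi ih =>
    intro q
    have hd := porb_disj x (hF i T hi q)
    have hsub : porb x H T q ∪ porb x H T (x i • q) ⊆ porb x H (insert i T) q := by
      have hm := partGen_mono x (Finset.subset_insert i T)
      rintro r (⟨w, hw, rfl⟩ | ⟨w, hw, rfl⟩)
      · exact ⟨w, hm hw, rfl⟩
      · exact ⟨w * x i, Subgroup.mul_mem _ (hm hw) (mem_partGen x (by simp)), mul_smul _ _ _⟩
    have h1 := Set.ncard_le_ncard hsub (Set.toFinite _)
    rw [Set.ncard_union_eq hd (Set.toFinite _) (Set.toFinite _)] at h1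
    rw [Finset.card_insert_of_notMem hi, pow_succ]
    have := ih q
    have := ih (x i • q)
    omega

lemma two_orbits [Finite (G ⧸ H)] (hF : Free x H) (hidx : H.index < n + 2 ^ n) (i : Fin n)
    (q r : G ⧸ H) : r ∈ porb x H (Finset.univ.erase i) q ∨
      r ∈ porb x H (Finset.univ.erase i) (x i • q) := by
  by_contra! hcon
  obtain ⟨h1, h2⟩ := hcon
  have hd := porb_disj x (hF i (Finset.univ.erase i) (by simp) q)
  have hd1 := porb_disj x h1
  have hd2 := porb_disj x h2
  have hle : _ ≤ H.index := Set.ncard_le_card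
    ((porb x H (Finset.univ.erase i) q ∪ porb x H (Finset.univ.erase i) (x i • q)) ∪
      porb x H (Finset.univ.erase i) r)
  rw [Set.ncard_union_eq (Set.disjoint_union_left.2 ⟨hd1, hd2⟩) (Set.toFinite _) (Set.toFinite _),
    Set.ncard_union_eq hd (Set.toFinite _) (Set.toFinite _)] at hle
  have c1 := card_porb x hF (Finset.univ.erase i) q
  have c2 := card_porb x hF (Finset.univ.erase i) (x i • q)
  have c3 := card_porb x hF (Finset.univ.erase i) r
  have hn : 0 < n := i.pos
  obtain ⟨k, rfl⟩ : ∃ k, n = k + 1 := ⟨n - 1, by omega⟩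
  have hk : k < 2 ^ k := Nat.lt_two_pow_self
  simp only [Finset.mem_univ, Finset.card_erase_of_mem, Finset.card_univ, Fintype.card_fin,
    Nat.add_sub_cancel] at c1 c2 c3
  rw [pow_succ] at hidx
  omega

open Classical in
/-- the two-colouring of the cosets attached to index `i` -/
noncomputable def col (x : Fin n → G) (H : Subgroup G) (i : Fin n) (q : G ⧸ H) : ZMod 2 :=
  if q ∈ porb x H (Finset.univ.erase i) ((1 : G) : G ⧸ H) then 0 else 1

lemma col_gen [Finite (G ⧸ H)] (hF : Free x H) (hidx : H.index < n + 2 ^ n) (j : Fin n)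
    (q : G ⧸ H) : (fun i => col x H i (x j • q)) =
      (fun i => col x H i q) + Pi.single j (1 : ZMod 2) := by
  classical
  funext i
  by_cases hij : j = i
  · subst hij
    have hf := hF j (Finset.univ.erase j) (by simp) q
    simp only [col, Pi.add_apply, Pi.single_eq_same]
    by_cases h1 : q ∈ porb x H (Finset.univ.erase j) ((1 : G) : G ⧸ H)
    · have h2 : x j • q ∉ porb x H (Finset.univ.erase j) ((1 : G) : G ⧸ H) :=
        fun h => hf (porb_trans x (porb_symm x h1) h)
      simp [h1, h2]
    · have h2 : x j • q ∈ porb x H (Finset.univ.erase j) ((1 : G) : G ⧸ H) := by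
        rcases two_orbits x hF hidx j q ((1 : G) : G ⧸ H) with h | h
        · exact absurd (porb_symm x h) h1
        · exact porb_symm x h
      simp only [h1, h2, if_true, if_false]
      decide
  · have hm : x j ∈ partGen x (Finset.univ.erase i) := mem_partGen x (by simp [hij])
    have : x j • q ∈ porb x H (Finset.univ.erase i) ((1 : G) : G ⧸ H) ↔
        q ∈ porb x H (Finset.univ.erase i) ((1 : G) : G ⧸ H) := by
      constructor
      · intro h
        simpa using porb_smul x h (Subgroup.inv_mem _ hm)
      · intro h
        exact porb_smul x h hm
    simp only [col, this, Pi.add_apply]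
    simp [Pi.single_apply, Ne.symm hij]

lemma exists_shift [Finite (G ⧸ H)] (hx : Subgroup.closure (Set.range x) = ⊤)
    (hF : Free x H) (hidx : H.index < n + 2 ^ n) (g : G) :
    ∃ v : Fin n → ZMod 2, ∀ q : G ⧸ H,
      (fun i => col x H i (g • q)) = (fun i => col x H i q) + v := by
  have hg : g ∈ Subgroup.closure (Set.range x) := by rw [hx]; trivial
  induction hg using Subgroup.closure_induction with
  | mem y hy =>
    obtain ⟨j, rfl⟩ := hy
    exact ⟨_, col_gen x hF hidx j⟩
  | one => exact ⟨0, fun q => by simp⟩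
  | mul a b _ _ ha hb =>
    obtain ⟨v, hv⟩ := ha
    obtain ⟨w, hw⟩ := hb
    refine ⟨w + v, fun q => ?_⟩
    simp only [mul_smul]
    rw [hv, hw, add_assoc]
  | inv a _ ha =>
    obtain ⟨v, hv⟩ := ha
    refine ⟨-v, fun q => ?_⟩
    have := hv (a⁻¹ • q)
    rw [smul_inv_smul] at this
    rw [this]
    abel

lemma exists_hom [Finite (G ⧸ H)] (hx : Subgroup.closure (Set.range x) = ⊤)
    (hF : Free x H) (hidx : H.index < n + 2 ^ n) :
    ∃ φ : G →* Multiplicative (Fin n → ZMod 2), H ≤ φ.ker ∧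
      ∀ j, φ (x j) = Multiplicative.ofAdd (Pi.single j 1) := by
  choose v hv using exists_shift x hx hF hidx
  have huniq : ∀ g w, (∀ q : G ⧸ H,
      (fun i => col x H i (g • q)) = (fun i => col x H i q) + w) → v g = w := by
    intro g w h
    exact add_left_cancel ((hv g ((1 : G) : G ⧸ H)).symm.trans (h _))
  refine ⟨MonoidHom.mk' (fun g => Multiplicative.ofAdd (v g)) ?_, ?_, ?_⟩
  · intro a b
    rw [← ofAdd_add]
    congr 1
    apply huniq
    intro q
    simp only [mul_smul]
    rw [hv, hv b, add_assoc, add_comm (v b)]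
  · intro g hg
    rw [MonoidHom.mem_ker]
    have h1 : g • ((1 : G) : G ⧸ H) = ((1 : G) : G ⧸ H) := by
      rw [MulAction.Quotient.smul_coe, QuotientGroup.eq]
      simpa using hg
    have h2 := hv g ((1 : G) : G ⧸ H)
    rw [h1] at h2
    have h3 : v g = 0 := by simpa using h2
    simp [h3]
  · intro j
    simp only [MonoidHom.mk'_apply]
    congr 1
    exact huniq _ _ (col_gen x hF hidx j)

lemma exists_preimage (φ : G →* Multiplicative (Fin n → ZMod 2))
    (hφ : ∀ j, φ (x j) = Multiplicative.ofAdd (Pi.single j 1)) (T : Finset (Fin n)) :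
    ∀ v : Fin n → ZMod 2, (∀ i ∉ T, v i = 0) →
      ∃ w ∈ partGen x T, φ w = Multiplicative.ofAdd v := by
  classical
  induction T using Finset.induction_on with
  | empty =>
    intro v hv
    refine ⟨1, Subgroup.one_mem _, ?_⟩
    have : v = 0 := funext fun i => hv i (by simp)
    simp [this]
  | insert i T hi ih =>
    intro v hv
    have hm := partGen_mono x (Finset.subset_insert i T)
    by_cases h0 : v i = 0
    · obtain ⟨w, hw, h⟩ := ih v (fun j hj => by
        by_cases hji : j = i
        · rw [hji, h0]
        · exact hv j (by simp [hji, hj]))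
      exact ⟨w, hm hw, h⟩
    · have h1 : v i = 1 := by
        revert h0
        generalize v i = a
        revert a
        decide
      obtain ⟨w, hw, h⟩ := ih (v - Pi.single i 1) (fun j hj => by
        by_cases hji : j = i
        · subst hji
          simp [h1]
        · simp [hji, hv j (by simp [hji, hj])])
      refine ⟨w * x i, Subgroup.mul_mem _ (hm hw) (mem_partGen x (by simp)), ?_⟩
      rw [map_mul, h, hφ, ← ofAdd_add]
      simp

end action

lemma free_of_no_primitive {G : Type*} [Group G] [Group.FG G] {n : ℕ}
    (hrank : Group.rank G = n) (x : Fin n → G) (hx : Subgroup.closure (Set.range x) = ⊤)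
    (H : Subgroup G) (hH : ∀ g ∈ H, ¬ IsPrimitive G g) : Free x H := by
  rintro i T hi q ⟨w, hw, h⟩
  have hp := isPrimitive_mul hrank x hx i w⁻¹ T hi (Subgroup.inv_mem _ hw)
  have hfix : (w⁻¹ * x i) • q = q := by
    rw [mul_smul, ← h, inv_smul_smul]
  obtain ⟨a, rfl⟩ := QuotientGroup.mk_surjective q
  rw [MulAction.Quotient.smul_coe, eq_comm, QuotientGroup.eq, smul_eq_mul, ← mul_assoc] at hfix
  exact hH _ hfix (isPrimitive_conj a _ hp)

lemma exists_gen_tuple {G : Type*} [Group G] [Group.FG G] {n : ℕ}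
    (hrank : Group.rank G = n) : ∃ x : Fin n → G, Subgroup.closure (Set.range x) = ⊤ := by
  obtain ⟨S, hc, hS⟩ := Group.rank_spec G
  rw [hrank] at hc
  refine ⟨fun i => (S.equivFinOfCardEq hc).symm i, ?_⟩
  have : Set.range (fun i => ((S.equivFinOfCardEq hc).symm i : G)) = S := by
    ext y
    constructor
    · rintro ⟨i, rfl⟩
      simp
    · intro hy
      exact ⟨S.equivFinOfCardEq hc ⟨y, hy⟩, by simp⟩
  rw [this, hS]

lemma main_forward {G : Type*} [Group G] [Group.FG G] (n : ℕ) (hrank : Group.rank G = n)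
    (H : Subgroup G) (hfin : H.index ≠ 0) (hidx : H.index < n + 2 ^ n)
    (hH : ∀ g ∈ H, ¬ IsPrimitive G g) :
    ∃ (x : Fin n → G) (φ : G →* Multiplicative (Fin n → ZMod 2)),
      Subgroup.closure (Set.range x) = ⊤ ∧ Function.Surjective φ ∧ φ.ker = H ∧
      ∀ j, φ (x j) = Multiplicative.ofAdd (Pi.single j 1) := by
  obtain ⟨x, hx⟩ := exists_gen_tuple hrank
  have hF := free_of_no_primitive hrank x hx H hH
  haveI : Finite (G ⧸ H) := Nat.finite_of_card_ne_zero hfin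
  obtain ⟨φ, hle, hφ⟩ := exists_hom x hx hF hidx
  have hsurj : Function.Surjective φ := by
    intro v
    obtain ⟨w, -, h⟩ := exists_preimage x φ hφ Finset.univ v.toAdd (by simp)
    exact ⟨w, h⟩
  refine ⟨x, φ, hx, hsurj, le_antisymm ?_ hle, hφ⟩
  have hk : φ.ker.index = 2 ^ n := by
    rw [Subgroup.index_ker, MonoidHom.range_eq_top.2 hsurj]
    simp [Nat.card_eq_fintype_card]
  have hmul := Subgroup.relIndex_mul_index hle
  rw [hk] at hmul
  have hn : n < 2 ^ n := Nat.lt_two_pow_self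
  rw [← Subgroup.relIndex_eq_one]
  have h0 : H.relIndex φ.ker ≠ 0 := by
    intro h
    rw [h, zero_mul] at hmul
    exact hfin hmul.symm
  have h2 : H.relIndex φ.ker < 2 := by
    by_contra! hcon
    have := Nat.mul_le_mul_right (2 ^ n) hcon
    omega
  omega

lemma main_backward {G : Type*} [Group G] [Group.FG G] (n : ℕ) (hrank : Group.rank G = n)
    (φ : G →* Multiplicative (Fin n → ZMod 2)) (hφ : Function.Surjective φ) (g : G)
    (hg : g ∈ φ.ker) : ¬ IsPrimitive G g := by
  classical
  rintro ⟨S, hgS, hc, hS⟩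
  let T : Finset (Fin n → ZMod 2) := (S.erase g).image (fun s => (φ s).toAdd)
  have hspan : Submodule.span (ZMod 2) (T : Set (Fin n → ZMod 2)) = ⊤ := by
    rw [eq_top_iff]
    intro v _
    obtain ⟨y, hy⟩ := hφ (Multiplicative.ofAdd v)
    have hv : v = (φ y).toAdd := by rw [hy]; rfl
    rw [hv]
    have hyS : y ∈ Subgroup.closure (S : Set G) := by rw [hS]; trivial
    clear hy hv
    induction hyS using Subgroup.closure_induction with
    | mem s hs =>
      by_cases hsg : s = g
      · subst hsg
        rw [MonoidHom.mem_ker.1 hg]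
        exact Submodule.zero_mem _
      · apply Submodule.subset_span
        simp only [T, Finset.coe_image]
        exact ⟨s, by simp [hsg]; exact hs, rfl⟩
    | one => simp
    | mul a b _ _ ha hb =>
      rw [map_mul, toAdd_mul]
      exact Submodule.add_mem _ ha hb
    | inv a _ ha =>
      rw [map_inv, toAdd_inv]
      exact Submodule.neg_mem _ ha
  have h1 := finrank_span_finset_le_card (R := ZMod 2) T
  rw [Set.finrank, hspan, finrank_top, Module.finrank_fin_fun] at h1
  have h2 : T.card ≤ (S.erase g).card := Finset.card_image_le
  have h3 := Finset.card_erase_lt_of_mem hgS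
  omega

/-- If `d(G) = n` and `H` is a subgroup of finite index with `[G:H] < n + 2^n`, then `H`
contains no primitive element of `G` if and only if `H` is normal in `G` with
`G ⧸ H ≅ C₂^n` (expressed via a surjective homomorphism onto `C₂^n` with kernel `H`);
moreover, in that case every left coset of `H` other than `H` itself contains a primitive
element of `G`. -/
theorem stmt_16 {G : Type*} [Group G] [Group.FG G] (n : ℕ) (hrank : Group.rank G = n)
    (H : Subgroup G) (hfin : H.index ≠ 0) (hidx : H.index < n + 2 ^ n) :
    ((∀ g ∈ H, ¬ IsPrimitive G g) ↔
      (H.Normal ∧ ∃ φ : G →* Multiplicative (Fin n → ZMod 2),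
        Function.Surjective φ ∧ φ.ker = H)) ∧
    ((∀ g ∈ H, ¬ IsPrimitive G g) →
      ∀ g : G, g ∉ H → ∃ x : G, g⁻¹ * x ∈ H ∧ IsPrimitive G x) := by
  refine ⟨⟨fun hH => ?_, ?_⟩, fun hH g hg => ?_⟩
  · obtain ⟨x, φ, -, hs, hk, -⟩ := main_forward n hrank H hfin hidx hH
    refine ⟨?_, φ, hs, hk⟩
    rw [← hk]
    infer_instance
  · rintro ⟨-, φ, hs, rfl⟩ g hg
    exact main_backward n hrank φ hs g hg
  · obtain ⟨x, φ, hx, hs, hk, hφ⟩ := main_forward n hrank H hfin hidx hH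
    have hne : (φ g).toAdd ≠ 0 := by
      intro h
      apply hg
      rw [← hk, MonoidHom.mem_ker]
      exact h
    obtain ⟨i, hi⟩ := Function.ne_iff.1 hne
    have h1 : (φ g).toAdd i = 1 := by
      revert hi
      simp only [Pi.zero_apply]
      generalize (φ g).toAdd i = a
      revert a
      decide
    obtain ⟨w, hw, h⟩ := exists_preimage x φ hφ (Finset.univ.erase i)
      ((φ g).toAdd - Pi.single i 1) (fun j hj => by
        have hji : j = i := by simpa using hj
        subst hji
        simp [h1])
    refine ⟨w * x i, ?_, isPrimitive_mul hrank x hx i w _ (by simp) hw⟩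
    rw [← hk, MonoidHom.mem_ker, map_mul, map_mul, map_inv, h, hφ, ← ofAdd_add]
    simp
end

section
/- Let G be a group with d(G) = n and let N be a normal subgroup of G. If N contains a primitive element of G, then every coset of N in G contains a primitive element of G. -/
/-- If `d(G) = n` and the normal subgroup `N` of `G` contains a primitive element of `G`,
then every (left) coset of `N` in `G` contains a primitive element of `G`. -/
theorem stmt_17 {G : Type*} [Group G] [Group.FG G] (n : ℕ) (hrank : Group.rank G = n)
    (N : Subgroup G) [N.Normal] (hprim : ∃ g ∈ N, IsPrimitive G g) :
    ∀ g : G, ∃ x : G, g⁻¹ * x ∈ N ∧ IsPrimitive G x := by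
  classical
  obtain ⟨a, haN, S, haS, hcard, hS⟩ := hprim
  intro g
  have key : Subgroup.closure ((S.erase a : Finset G) : Set G) ⊔ N = ⊤ := by
    rw [eq_top_iff, ← hS, Subgroup.closure_le]
    intro y hy
    by_cases h : y = a
    · subst h
      exact (le_sup_right : N ≤ _) haN
    · exact (le_sup_left : Subgroup.closure ((S.erase a : Finset G) : Set G) ≤ _)
        (Subgroup.subset_closure (by simpa [h] using hy))
  have hg : g ∈ Subgroup.closure ((S.erase a : Finset G) : Set G) ⊔ N := by
    rw [key]; trivial
  obtain ⟨w, hw, m, hm, rfl⟩ := Subgroup.mem_sup_of_normal_right.mp hg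
  have hgen : Subgroup.closure ((insert (w * a) (S.erase a) : Finset G) : Set G) = ⊤ := by
    have hle : Subgroup.closure ((S.erase a : Finset G) : Set G) ≤
        Subgroup.closure ((insert (w * a) (S.erase a) : Finset G) : Set G) :=
      Subgroup.closure_mono (by exact_mod_cast Finset.subset_insert _ _)
    rw [eq_top_iff, ← hS, Subgroup.closure_le]
    intro y hy
    by_cases h : y = a
    · subst h
      have h1 : w * y ∈ Subgroup.closure
          ((insert (w * y) (S.erase y) : Finset G) : Set G) :=
        Subgroup.subset_closure (by simp)
      have h2 := mul_mem (inv_mem (hle hw)) h1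
      simpa using h2
    · exact hle (Subgroup.subset_closure (by simpa [h] using hy))
  refine ⟨w * a, ?_, insert (w * a) (S.erase a), Finset.mem_insert_self _ _, ?_, hgen⟩
  · have : (w * m)⁻¹ * (w * a) = m⁻¹ * a := by group
    rw [this]
    exact mul_mem (inv_mem hm) haN
  · apply le_antisymm
    · have h1 := Finset.card_insert_le (w * a) (S.erase a)
      have h2 := Finset.card_erase_add_one haS
      omega
    · exact Group.rank_le hgen
end

section
/- Let n ≥ 2, let G be a group with d(G) ≥ n, and let H be a subgroup of G of index n + 2. If S is a generating n-tuple of G such that no two distinct entries of S lie in the same left coset of H and no entry of S lies in H, then every left coset of H other than H itself contains a primitive element of G. -/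
theorem prim_of_tuple {G : Type*} [Group G] [Group.FG G] (n : ℕ)
    (hrank : n ≤ Group.rank G) (T : Fin n → G)
    (hT : Subgroup.closure (Set.range T) = ⊤) (i : Fin n) : IsPrimitive G (T i) := by
  classical
  have hc : Subgroup.closure ((Finset.univ.image T : Finset G) : Set G) = ⊤ := by
    simpa using hT
  refine ⟨Finset.univ.image T, by simp, le_antisymm ?_ (Group.rank_le hc), hc⟩
  refine le_trans Finset.card_image_le ?_
  simpa using hrank

theorem prim_of_update {G : Type*} [Group G] [Group.FG G] (n : ℕ)
    (hrank : n ≤ Group.rank G) (S : Fin n → G)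
    (hS : Subgroup.closure (Set.range S) = ⊤) (i : Fin n) (x : G)
    (hx : ∀ K : Subgroup G, x ∈ K → (∀ k, k ≠ i → S k ∈ K) → S i ∈ K) :
    IsPrimitive G x := by
  have h := prim_of_tuple n hrank (Function.update S i x) ?_ i
  · simpa using h
  · rw [eq_top_iff, ← hS, Subgroup.closure_le]
    have hk : ∀ k, k ≠ i → S k ∈ Subgroup.closure (Set.range (Function.update S i x)) := by
      intro k hk
      exact Subgroup.subset_closure ⟨k, by simp [hk]⟩
    rintro _ ⟨k, rfl⟩
    by_cases hki : k = i
    · subst hki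
      exact hx _ (Subgroup.subset_closure ⟨k, by simp⟩) hk
    · exact hk k hki

/-- Let `n ≥ 2`, `d(G) ≥ n`, and `H` a subgroup of `G` of index `n + 2`.  If `S` is a
generating `n`-tuple of `G` such that no two distinct entries of `S` lie in the same left
coset of `H` and no entry of `S` lies in `H`, then every left coset of `H` other than `H`
itself contains a primitive element of `G`. -/
theorem stmt_18 {G : Type*} [Group G] [Group.FG G] (n : ℕ) (hn : 2 ≤ n)
    (hrank : n ≤ Group.rank G) (H : Subgroup G) (hidx : H.index = n + 2)
    (S : Fin n → G) (hS : Subgroup.closure (Set.range S) = ⊤)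
    (hclean : ∀ i j, i ≠ j → (S i)⁻¹ * S j ∉ H) (hout : ∀ i, S i ∉ H) :
    ∀ g : G, g ∉ H → ∃ x : G, g⁻¹ * x ∈ H ∧ IsPrimitive G x := by
  intro g hg
  by_contra hno
  push Not at hno
  have hno' : ∀ x : G, IsPrimitive G x → (g : G ⧸ H) ≠ (x : G ⧸ H) := by
    intro x hx h
    exact hno x (QuotientGroup.eq.1 h) hx
  have hfin : Finite (G ⧸ H) := by
    apply Nat.finite_of_card_ne_zero
    change H.index ≠ 0
    omega
  let f : Option (Option (Fin n)) → G ⧸ H := fun o => match o with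
    | none => ((1 : G) : G ⧸ H)
    | some none => (g : G ⧸ H)
    | some (some i) => (S i : G ⧸ H)
  have hg1 : (g : G ⧸ H) ≠ ((1 : G) : G ⧸ H) := by
    intro h
    have := QuotientGroup.eq.1 h.symm
    simp at this
    exact hg this
  have hS1 : ∀ i, (S i : G ⧸ H) ≠ ((1 : G) : G ⧸ H) := by
    intro i h
    have := QuotientGroup.eq.1 h.symm
    simp at this
    exact hout i this
  have hgS : ∀ i, (g : G ⧸ H) ≠ (S i : G ⧸ H) := fun i =>
    hno' _ (prim_of_tuple n hrank S hS i)
  have hinj : Function.Injective f := by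
    rintro (_ | _ | i) (_ | _ | j) h
    · rfl
    · exact absurd h.symm hg1
    · exact absurd h.symm (hS1 j)
    · exact absurd h hg1
    · rfl
    · exact absurd h (hgS j)
    · exact absurd h (hS1 i)
    · exact absurd h.symm (hgS i)
    · by_cases hij : i = j
      · rw [hij]
      · exact absurd (QuotientGroup.eq.1 h) (hclean i j hij)
  have hbij : Function.Bijective f := by
    apply (Nat.bijective_iff_injective_and_card f).2 ⟨hinj, ?_⟩
    change _ = H.index
    rw [hidx]
    simp
  have key : ∀ i, S i • (g : G ⧸ H) = (g : G ⧸ H) := by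
    intro i
    obtain ⟨o, ho⟩ := hbij.2 (S i • (g : G ⧸ H))
    have ho' : (g : G ⧸ H) = (S i)⁻¹ • f o := by rw [ho, inv_smul_smul]
    rcases o with _ | _ | j
    · exfalso
      refine hno' ((S i)⁻¹ * 1) (prim_of_update n hrank S hS i _ ?_) ho'
      intro K hK _
      simpa using hK
    · exact ho.symm
    · exfalso
      by_cases hij : j = i
      · subst hij
        apply hg1
        rw [ho']
        change (((S j)⁻¹ * S j : G) : G ⧸ H) = _
        simp
      · refine hno' ((S i)⁻¹ * S j) (prim_of_update n hrank S hS i _ ?_) ho'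
        intro K hK hk
        have h1 := K.mul_mem (hk j hij) (K.inv_mem hK)
        simpa using h1
  have hst : MulAction.stabilizer G (g : G ⧸ H) = ⊤ := by
    rw [eq_top_iff, ← hS, Subgroup.closure_le]
    rintro _ ⟨i, rfl⟩
    exact key i
  have hmem : g⁻¹ ∈ MulAction.stabilizer G (g : G ⧸ H) := by rw [hst]; trivial
  have h2 : g⁻¹ • (g : G ⧸ H) = (g : G ⧸ H) := hmem
  apply hg1
  rw [← h2]
  change ((g⁻¹ * g : G) : G ⧸ H) = _
  simp
end
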